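/- (From the proof of Proposition 4.) Suppose Assumptions 1, 2 and 3 hold and X and Y are conditionally independent given Z. Let J ≥ 1, fix locations (t_j)_{j=1}^J in 𝒳̈ × 𝒴, let (r_n) satisfy n^{(β+γ)/(2β)} = o(r_n), and set every RLS regularization parameter to λ_{r_n} = r_n^{−1/(1+γ)}. Then the empirical covariance matrix Σ_{n,r_n} = (1/n)Σ_{i=1}^n ũ_{i,r_n} ũ_{i,r_n}ᵀ converges in probability, as n → ∞, to Σ = E[u_1 u_1ᵀ]. -/

import Mathlib

open MeasureTheory ProbabilityTheory Filter Topology Asymptotics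
open scoped RealInnerProductSpace

noncomputable section

namespace CIPaper

/-- A positive definite kernel. -/
def PosDefKernel {D : Type*} (k : D → D → ℝ) : Prop :=
  ∀ (n : ℕ) (x : Fin n → D) (c : Fin n → ℝ),
    0 ≤ ∑ i : Fin n, ∑ j : Fin n, c i * c j * k (x i) (x j)

/-- The mean embedding of `ν` with respect to the kernel `k`. -/
def meanEmbed {D : Type*} [MeasurableSpace D] (k : D → D → ℝ) (ν : Measure D) (t : D) : ℝ :=
  ∫ x, k x t ∂ν

/-- A kernel is characteristic if the mean embedding is injective on probability measures. -/
def Characteristic {D : Type*} [MeasurableSpace D] (k : D → D → ℝ) : Prop :=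
  ∀ P Q : Measure D, IsProbabilityMeasure P → IsProbabilityMeasure Q →
    (∀ t, meanEmbed k P t = meanEmbed k Q t) → P = Q

def BoundedKernel {D : Type*} (k : D → D → ℝ) : Prop := ∃ C, ∀ x y, |k x y| ≤ C

/-- Assumption 1 of the paper, for the tensor product kernel built from `kX` and `kY` :
the tensor kernel is positive definite, characteristic, bounded, continuous and analytic. -/
structure Assumption1 {DX DY : Type*} [MeasurableSpace DX] [MeasurableSpace DY]
    [NormedAddCommGroup DX] [NormedSpace ℝ DX] [NormedAddCommGroup DY] [NormedSpace ℝ DY]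
    (kX : DX → DX → ℝ) (kY : DY → DY → ℝ) : Prop where
  posdef : PosDefKernel fun p q : DX × DY => kX p.1 q.1 * kY p.2 q.2
  charac : Characteristic fun p q : DX × DY => kX p.1 q.1 * kY p.2 q.2
  bounded : BoundedKernel fun p q : DX × DY => kX p.1 q.1 * kY p.2 q.2
  continuous : Continuous fun pq : (DX × DY) × (DX × DY) => kX pq.1.1 pq.2.1 * kY pq.1.2 pq.2.2
  analytic : ∀ p : DX × DY, AnalyticOnNhd ℝ (fun q : DX × DY => kX p.1 q.1 * kY p.2 q.2) Set.univ

/-- The random metric `d_{p,J}` between two measures, with locations `t`. -/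
def dpJ {D : Type*} [MeasurableSpace D] (k : D → D → ℝ) (p : ℕ) {J : ℕ}
    (t : Fin J → D) (P Q : Measure D) : ℝ :=
  ((J : ℝ)⁻¹ * ∑ j : Fin J, |meanEmbed k P (t j) - meanEmbed k Q (t j)| ^ p) ^ ((p : ℝ)⁻¹)

/-- `P` is the measure `P_{Ẍ⊗Y|Z}` of the paper : a Borel probability measure with
`P(A×B) = E[E[1_A(Ẍ)|Z]·E[1_B(Y)|Z]]` for all measurable `A`, `B`. -/
def IsCondProdMeasure {Ω : Type*} [MeasurableSpace Ω] (μ : Measure Ω)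
    {DX DZ DY : Type*} [MeasurableSpace DX] [MeasurableSpace DZ] [MeasurableSpace DY]
    (X : Ω → DX) (Z : Ω → DZ) (Y : Ω → DY) (P : Measure ((DX × DZ) × DY)) : Prop :=
  IsProbabilityMeasure P ∧
    ∀ (A : Set (DX × DZ)) (B : Set DY), MeasurableSet A → MeasurableSet B →
      (P (A ×ˢ B)).toReal =
        ∫ ω, ((μ[fun ω' => A.indicator (fun _ => (1 : ℝ)) (X ω', Z ω') |
                MeasurableSpace.comap Z inferInstance]) ω)
            * ((μ[fun ω' => B.indicator (fun _ => (1 : ℝ)) (Y ω') |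
                MeasurableSpace.comap Z inferInstance]) ω) ∂μ

/-- The witness function `Δ`. -/
def witness {Ω : Type*} [MeasurableSpace Ω] (μ : Measure Ω)
    {DX DZ DY : Type*} [MeasurableSpace DZ]
    (kX : DX × DZ → DX × DZ → ℝ) (kY : DY → DY → ℝ)
    (X : Ω → DX) (Z : Ω → DZ) (Y : Ω → DY) (t1 : DX × DZ) (t2 : DY) : ℝ :=
  ∫ ω, (kX t1 (X ω, Z ω) -
          (μ[fun ω' => kX t1 (X ω', Z ω') | MeasurableSpace.comap Z inferInstance]) ω)
      * (kY t2 (Y ω) -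
          (μ[fun ω' => kY t2 (Y ω') | MeasurableSpace.comap Z inferInstance]) ω) ∂μ

/-- Cramér–Wold characterization: `ν` is the centered Gaussian measure on `ℝ^J` with
covariance matrix `S`. -/
def IsCenteredGaussian {J : ℕ} (S : Matrix (Fin J) (Fin J) ℝ) (ν : Measure (Fin J → ℝ)) : Prop :=
  IsProbabilityMeasure ν ∧
    ∀ a : Fin J → ℝ,
      ν.map (fun v => ∑ j, a j * v j) =
        gaussianReal 0 (Real.toNNReal (∑ i, ∑ j, a i * S i j * a j))

/-- Convergence in distribution (weak convergence of the image laws). -/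
def TendstoInDistribution {Ω : Type*} [MeasurableSpace Ω] (μ : Measure Ω) {E : Type*}
    [TopologicalSpace E] [MeasurableSpace E] (W : ℕ → Ω → E) (ν : Measure E) : Prop :=
  ∀ f : BoundedContinuousFunction E ℝ,
    Tendsto (fun n : ℕ => ∫ ω, f (W n ω) ∂μ) atTop (𝓝 (∫ x, f x ∂ν))

/-- The one-sample statistic `u_i(j)` of the paper (oracle version), where `e1`, `e2` are
the conditional mean functions. -/
def uStat {Ω DX DZ DY : Type*} (kX : DX × DZ → DX × DZ → ℝ) (kY : DY → DY → ℝ)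
    (e1 : DX × DZ → DZ → ℝ) (e2 : DY → DZ → ℝ)
    (xS : ℕ → Ω → DX) (zS : ℕ → Ω → DZ) (yS : ℕ → Ω → DY)
    {J : ℕ} (t : Fin J → (DX × DZ) × DY) (i : ℕ) (j : Fin J) (ω : Ω) : ℝ :=
  (kX (t j).1 (xS i ω, zS i ω) - e1 (t j).1 (zS i ω)) *
    (kY (t j).2 (yS i ω) - e2 (t j).2 (zS i ω))

/-- `S_n`, the empirical mean of the `u_i`. -/
def SStat {Ω DX DZ DY : Type*} (kX : DX × DZ → DX × DZ → ℝ) (kY : DY → DY → ℝ)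
    (e1 : DX × DZ → DZ → ℝ) (e2 : DY → DZ → ℝ)
    (xS : ℕ → Ω → DX) (zS : ℕ → Ω → DZ) (yS : ℕ → Ω → DY)
    {J : ℕ} (t : Fin J → (DX × DZ) × DY) (n : ℕ) (ω : Ω) : Fin J → ℝ :=
  fun j => (n : ℝ)⁻¹ * ∑ i ∈ Finset.range n, uStat kX kY e1 e2 xS zS yS t i j ω

/-- The covariance matrix `Σ = E[u₁ u₁ᵀ]`. -/
def covMat {Ω DX DZ DY : Type*} [MeasurableSpace Ω] (μ : Measure Ω)
    (kX : DX × DZ → DX × DZ → ℝ) (kY : DY → DY → ℝ)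
    (e1 : DX × DZ → DZ → ℝ) (e2 : DY → DZ → ℝ)
    (xS : ℕ → Ω → DX) (zS : ℕ → Ω → DZ) (yS : ℕ → Ω → DY)
    {J : ℕ} (t : Fin J → (DX × DZ) × DY) : Matrix (Fin J) (Fin J) ℝ :=
  Matrix.of fun j j' =>
    ∫ ω, uStat kX kY e1 e2 xS zS yS t 0 j ω * uStat kX kY e1 e2 xS zS yS t 0 j' ω ∂μ

/-- The empirical covariance matrix `Σ̂_n` of the oracle `u_i`. -/
def covHat {Ω DX DZ DY : Type*} (kX : DX × DZ → DX × DZ → ℝ) (kY : DY → DY → ℝ)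
    (e1 : DX × DZ → DZ → ℝ) (e2 : DY → DZ → ℝ)
    (xS : ℕ → Ω → DX) (zS : ℕ → Ω → DZ) (yS : ℕ → Ω → DY)
    {J : ℕ} (t : Fin J → (DX × DZ) × DY) (n : ℕ) (ω : Ω) : Matrix (Fin J) (Fin J) ℝ :=
  Matrix.of fun j j' => (n : ℝ)⁻¹ * ∑ i ∈ Finset.range n,
    uStat kX kY e1 e2 xS zS yS t i j ω * uStat kX kY e1 e2 xS zS yS t i j' ω

/-- The regularized least squares estimator built from the first `r` samples `zs` with
targets `target`, kernel `kZ` and regularization parameter `lam`. -/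
def rls {DZ : Type*} (kZ : DZ → DZ → ℝ) (zs : ℕ → DZ) (target : ℕ → ℝ)
    (r : ℕ) (lam : ℝ) (z : DZ) : ℝ :=
  ∑ i : Fin r,
    (((Matrix.of fun i l : Fin r => kZ (zs i) (zs l)) +
        ((r : ℝ) * lam) • (1 : Matrix (Fin r) (Fin r) ℝ))⁻¹.mulVec
      fun i : Fin r => target i) i * kZ (zs i) z

/-- The statistic `ũ_{i,r}(j)` built from the RLS estimators. -/
def uTildeStat {Ω DX DZ DY : Type*} (kX : DX × DZ → DX × DZ → ℝ) (kY : DY → DY → ℝ)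
    {J : ℕ} (kZ1 kZ2 : Fin J → DZ → DZ → ℝ)
    (xS : ℕ → Ω → DX) (zS : ℕ → Ω → DZ) (yS : ℕ → Ω → DY)
    (t : Fin J → (DX × DZ) × DY) (r : ℕ) (lam : ℝ) (i : ℕ) (j : Fin J) (ω : Ω) : ℝ :=
  (kX (t j).1 (xS i ω, zS i ω) -
      rls (kZ1 j) (fun l => zS l ω) (fun l => kX (t j).1 (xS l ω, zS l ω)) r lam (zS i ω)) *
    (kY (t j).2 (yS i ω) -
      rls (kZ2 j) (fun l => zS l ω) (fun l => kY (t j).2 (yS l ω)) r lam (zS i ω))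

/-- `S̃_{n,r}`. -/
def STilde {Ω DX DZ DY : Type*} (kX : DX × DZ → DX × DZ → ℝ) (kY : DY → DY → ℝ)
    {J : ℕ} (kZ1 kZ2 : Fin J → DZ → DZ → ℝ)
    (xS : ℕ → Ω → DX) (zS : ℕ → Ω → DZ) (yS : ℕ → Ω → DY)
    (t : Fin J → (DX × DZ) × DY) (n r : ℕ) (lam : ℝ) (ω : Ω) : Fin J → ℝ :=
  fun j => (n : ℝ)⁻¹ * ∑ i ∈ Finset.range n,
    uTildeStat kX kY kZ1 kZ2 xS zS yS t r lam i j ω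

/-- `Σ_{n,r}`, the empirical covariance matrix of the `ũ_{i,r}`. -/
def covTilde {Ω DX DZ DY : Type*} (kX : DX × DZ → DX × DZ → ℝ) (kY : DY → DY → ℝ)
    {J : ℕ} (kZ1 kZ2 : Fin J → DZ → DZ → ℝ)
    (xS : ℕ → Ω → DX) (zS : ℕ → Ω → DZ) (yS : ℕ → Ω → DY)
    (t : Fin J → (DX × DZ) × DY) (n r : ℕ) (lam : ℝ) (ω : Ω) : Matrix (Fin J) (Fin J) ℝ :=
  Matrix.of fun j j' => (n : ℝ)⁻¹ * ∑ i ∈ Finset.range n,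
    uTildeStat kX kY kZ1 kZ2 xS zS yS t r lam i j ω *
      uTildeStat kX kY kZ1 kZ2 xS zS yS t r lam i j' ω

open scoped Classical in
/-- The inverse square root `M^{-1/2}` of a positive semidefinite matrix. -/
def invSqrtMat {J : ℕ} (M : Matrix (Fin J) (Fin J) ℝ) : Matrix (Fin J) (Fin J) ℝ :=
  if h : M.PosSemidef then
    ((h.1.eigenvectorUnitary : Matrix (Fin J) (Fin J) ℝ) *
      Matrix.diagonal (fun i => Real.sqrt (h.1.eigenvalues i)) *
      (star h.1.eigenvectorUnitary : Matrix (Fin J) (Fin J) ℝ))⁻¹ else 0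

/-- The chi-square distribution with `J` degrees of freedom, realized as the law of the sum of
squares of `J` independent standard Gaussians. -/
def chiSq (J : ℕ) : Measure ℝ :=
  (Measure.pi fun _ : Fin J => gaussianReal 0 1).map fun v => ∑ j, v j ^ 2

/-- Assumption 2 of the paper for the operator `L` on `L²(P_Z)` :
`Tr((L + λ)⁻¹ L) ≤ Q λ^{-γ}`, the trace of the positive operator being computed in any
Hilbert basis. -/
def TraceAssumption {DZ : Type*} [MeasurableSpace DZ] (PZ : Measure DZ)
    (L : Lp ℝ 2 PZ →L[ℝ] Lp ℝ 2 PZ) (Q γ : ℝ) : Prop :=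
  ∀ lam : ℝ, 0 < lam → ∀ (ι : Type) (e : HilbertBasis ι ℝ (Lp ℝ 2 PZ)),
    ∑' i, ⟪(Ring.inverse (L + lam • (1 : Lp ℝ 2 PZ →L[ℝ] Lp ℝ 2 PZ)) * L) (e i), e i⟫ ≤
      Q * lam ^ (-γ)

/-- `P = L^s` : `P` is self-adjoint and acts as `c ^ s` on every eigenvector of `L`
(this determines the fractional power, via functional calculus, of a positive self-adjoint
compact operator). -/
def IsFracPower {H : Type*} [NormedAddCommGroup H] [InnerProductSpace ℝ H]
    (L : H →L[ℝ] H) (s : ℝ) (P : H →L[ℝ] H) : Prop :=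
  (∀ v w : H, ⟪P v, w⟫ = ⟪v, P w⟫) ∧
    ∀ (c : ℝ) (v : H), L v = c • v → P v = c ^ s • v

end CIPaper

open CIPaper

/-!
A positive definite kernel `k(z, z') = ⟪Φ z, Φ z'⟫` turns the RLS estimator into ridge regression on
the features `Φ z`, and the source condition with `β ≥ 1` puts the regression function, almost
everywhere, in the form `⟪Φ ·, u⟫`. In the singular system of the operator `x ↦ ⟪Φ ·, x⟫` the trace
assumption bounds the expected trace of the hat matrix, hence the energy of the noise. For
`λ = r^{-1/(1+γ)}` it follows that the error `d` of the estimator satisfies `‖d‖² = O_P(1)` and that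
the mean of `⟪Φ z_i, d⟫²` over the first `r` samples is `O_P(λ)`. Since the second moments of `Φ`
over the first `r` and the first `n` samples differ by `o_P(1)`, the mean over all `n` samples
tends to zero as well. Products of bounded arrays that are close in mean remain close in mean, so
the mean of `ũ(j) ũ(j')` has the same limit in probability as the mean of `u(j) u(j')`, which is
given by the law of large numbers.
-/

namespace CIPaper

/-! ### Ridge regression in an inner product space -/

section Ridge

open scoped Matrix

variable {ι H : Type*} [Fintype ι] [DecidableEq ι] [NormedAddCommGroup H] [InnerProductSpace ℝ H]

/-- Coefficients of the ridge regression of the targets `y` on the features `Φ`, with penalty `c`.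
The normalisation is that of the penalised sum (not mean) of squares. -/
def ridgeCoef (Φ : ι → H) (c : ℝ) (y : ι → ℝ) : ι → ℝ :=
  (Matrix.gram ℝ Φ + c • 1)⁻¹ *ᵥ y

/-- The ridge regression estimator: the minimiser of `q ↦ c ‖q‖² + ∑ i, (y i - ⟪Φ i, q⟫)²`. -/
def ridge (Φ : ι → H) (c : ℝ) (y : ι → ℝ) : H :=
  ∑ i, ridgeCoef Φ c y i • Φ i

/-- The hat matrix of ridge regression, mapping the targets to the fitted values. -/
def ridgeHat (Φ : ι → H) (c : ℝ) : Matrix ι ι ℝ :=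
  Matrix.gram ℝ Φ * (Matrix.gram ℝ Φ + c • 1)⁻¹

variable {Φ : ι → H} {c : ℝ} {y : ι → ℝ}

theorem isUnit_det_gram_add_smul_one (Φ : ι → H) (hc : 0 < c) :
    IsUnit (Matrix.gram ℝ Φ + c • 1).det :=
  (Matrix.isUnit_iff_isUnit_det _).1
    (Matrix.PosDef.posSemidef_add (Matrix.posSemidef_gram ℝ Φ) (Matrix.PosDef.one.smul hc)).isUnit

theorem ridge_add (y y' : ι → ℝ) : ridge Φ c (y + y') = ridge Φ c y + ridge Φ c y' := by
  simp only [ridge, ridgeCoef, Matrix.mulVec_add, Pi.add_apply, add_smul, Finset.sum_add_distrib]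

theorem inner_ridge_eq_sum (q : H) : ⟪q, ridge Φ c y⟫ = ∑ i, ridgeCoef Φ c y i * ⟪Φ i, q⟫ := by
  simp only [ridge, inner_sum, inner_smul_right, real_inner_comm]

theorem ridgeHat_mulVec (Φ : ι → H) (c : ℝ) (y : ι → ℝ) :
    ridgeHat Φ c *ᵥ y = Matrix.gram ℝ Φ *ᵥ ridgeCoef Φ c y :=
  (Matrix.mulVec_mulVec _ _ _).symm

theorem inner_ridge (Φ : ι → H) (c : ℝ) (y : ι → ℝ) (i : ι) :
    ⟪Φ i, ridge Φ c y⟫ = (ridgeHat Φ c *ᵥ y) i := by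
  rw [ridgeHat_mulVec]
  simp only [inner_ridge_eq_sum, Matrix.mulVec_apply_eq_sum, Matrix.gram_apply, real_inner_comm,
    mul_comm]

theorem inner_ridge_add_mul_ridgeCoef (Φ : ι → H) (hc : 0 < c) (y : ι → ℝ) (i : ι) :
    ⟪Φ i, ridge Φ c y⟫ + c * ridgeCoef Φ c y i = y i := by
  have h : (Matrix.gram ℝ Φ + c • 1) *ᵥ ridgeCoef Φ c y = y := by
    rw [ridgeCoef, Matrix.mulVec_mulVec,
      Matrix.mul_nonsing_inv _ (isUnit_det_gram_add_smul_one Φ hc), Matrix.one_mulVec]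
  rw [inner_ridge, ridgeHat_mulVec]
  simpa only [Matrix.add_mulVec, Matrix.smul_mulVec, Matrix.one_mulVec, Pi.add_apply,
    Pi.smul_apply, smul_eq_mul] using congrFun h i

theorem ridge_completed_square (Φ : ι → H) (hc : 0 < c) (y : ι → ℝ) (q : H) :
    c * ‖q‖ ^ 2 + ∑ i, (y i - ⟪Φ i, q⟫) ^ 2 =
      c * (y ⬝ᵥ ridgeCoef Φ c y) + c * ‖q - ridge Φ c y‖ ^ 2
        + ∑ i, ⟪Φ i, q - ridge Φ c y⟫ ^ 2 := by
  have hq := inner_ridge_eq_sum (Φ := Φ) (c := c) (y := y) q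
  have hr : ‖ridge Φ c y‖ ^ 2 = ∑ i, ridgeCoef Φ c y i * ⟪Φ i, ridge Φ c y⟫ := by
    rw [← inner_ridge_eq_sum, real_inner_self_eq_norm_sq]
  rw [norm_sub_sq_real, hr, hq, dotProduct]
  suffices ∑ i, (y i - ⟪Φ i, q⟫) ^ 2 =
      ∑ i, (c * (y i * ridgeCoef Φ c y i) - 2 * c * (ridgeCoef Φ c y i * ⟪Φ i, q⟫)
        + c * (ridgeCoef Φ c y i * ⟪Φ i, ridge Φ c y⟫) + ⟪Φ i, q - ridge Φ c y⟫ ^ 2) by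
    rw [this]
    simp only [Finset.sum_add_distrib, Finset.sum_sub_distrib, ← Finset.mul_sum]
    ring
  refine Finset.sum_congr rfl fun i _ => ?_
  rw [inner_sub_right, ← inner_ridge_add_mul_ridgeCoef Φ hc y i]
  ring

theorem dotProduct_ridgeCoef_nonneg (Φ : ι → H) (hc : 0 < c) (y : ι → ℝ) :
    0 ≤ y ⬝ᵥ ridgeCoef Φ c y := by
  have h : y ⬝ᵥ ridgeCoef Φ c y = ‖ridge Φ c y‖ ^ 2 + c * ∑ i, ridgeCoef Φ c y i ^ 2 := by
    rw [← real_inner_self_eq_norm_sq, inner_ridge_eq_sum, Finset.mul_sum, ← Finset.sum_add_distrib]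
    refine Finset.sum_congr rfl fun i _ => ?_
    conv_lhs => rw [← inner_ridge_add_mul_ridgeCoef Φ hc y i]
    ring
  rw [h]
  positivity

theorem ridge_energy (Φ : ι → H) (hc : 0 < c) (y : ι → ℝ) :
    c * ‖ridge Φ c y‖ ^ 2 + ∑ i, ⟪Φ i, ridge Φ c y⟫ ^ 2 = y ⬝ᵥ ridgeHat Φ c *ᵥ y := by
  have hsq := ridge_completed_square Φ hc y 0
  have hhat : y ⬝ᵥ ridgeHat Φ c *ᵥ y = ∑ i, y i ^ 2 - c * (y ⬝ᵥ ridgeCoef Φ c y) := by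
    rw [dotProduct, dotProduct, Finset.mul_sum, ← Finset.sum_sub_distrib]
    refine Finset.sum_congr rfl fun i _ => ?_
    rw [← inner_ridge]
    linear_combination y i * inner_ridge_add_mul_ridgeCoef Φ hc y i
  simp only [norm_zero, inner_zero_right, sub_zero, zero_sub, norm_neg, inner_neg_right,
    neg_sq] at hsq
  linarith

theorem ridge_bias (Φ : ι → H) (hc : 0 < c) (u : H) :
    c * ‖u - ridge Φ c fun i => ⟪Φ i, u⟫‖ ^ 2
      + ∑ i, ⟪Φ i, u - ridge Φ c fun i => ⟪Φ i, u⟫⟫ ^ 2 ≤ c * ‖u‖ ^ 2 := by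
  have hsq := ridge_completed_square Φ hc (fun i => ⟪Φ i, u⟫) u
  have hpos := mul_nonneg hc.le (dotProduct_ridgeCoef_nonneg Φ hc fun i => ⟪Φ i, u⟫)
  simp only [sub_self, zero_pow two_ne_zero, Finset.sum_const_zero, add_zero] at hsq
  linarith

theorem ridge_error (Φ : ι → H) (hc : 0 < c) (u : H) (ε : ι → ℝ) :
    c * ‖ridge Φ c (fun i => ⟪Φ i, u⟫ + ε i) - u‖ ^ 2
        + ∑ i, ⟪Φ i, ridge Φ c (fun i => ⟪Φ i, u⟫ + ε i) - u⟫ ^ 2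
      ≤ 2 * (c * ‖u‖ ^ 2 + ε ⬝ᵥ ridgeHat Φ c *ᵥ ε) := by
  set b := u - ridge Φ c fun i => ⟪Φ i, u⟫
  set e := ridge Φ c ε
  have hdecomp : ridge Φ c (fun i => ⟪Φ i, u⟫ + ε i) - u = e - b := by
    rw [show (fun i => ⟪Φ i, u⟫ + ε i) = (fun i => ⟪Φ i, u⟫) + ε from rfl, ridge_add]
    simp only [b, e]
    abel
  have hnorm : ‖e - b‖ ^ 2 ≤ 2 * (‖e‖ ^ 2 + ‖b‖ ^ 2) := by
    nlinarith [parallelogram_law_with_norm ℝ e b, sq_nonneg ‖e + b‖]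
  have hsum : ∑ i, ⟪Φ i, e - b⟫ ^ 2 ≤ 2 * (∑ i, ⟪Φ i, e⟫ ^ 2 + ∑ i, ⟪Φ i, b⟫ ^ 2) := by
    rw [← Finset.sum_add_distrib, Finset.mul_sum]
    refine Finset.sum_le_sum fun i _ => ?_
    rw [inner_sub_right]
    nlinarith [sq_nonneg (⟪Φ i, e⟫ + ⟪Φ i, b⟫)]
  rw [hdecomp]
  linarith [ridge_energy Φ hc ε, ridge_bias Φ hc u, mul_le_mul_of_nonneg_left hnorm hc.le]

/-- The minimality of the ridge estimator is tested against the shrunk vector `m • v`. -/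
theorem dotProduct_ridgeCoef_le (Φ : ι → H) (hc : 0 < c) (v : H) (m : ℝ) :
    (fun i => ⟪Φ i, v⟫) ⬝ᵥ (ridgeCoef Φ c fun i => ⟪Φ i, v⟫) ≤
      m ^ 2 * ‖v‖ ^ 2 + (1 - m) ^ 2 / c * ∑ i, ⟪Φ i, v⟫ ^ 2 := by
  have hsq := ridge_completed_square Φ hc (fun i => ⟪Φ i, v⟫) (m • v)
  have hres : ∑ i, (⟪Φ i, v⟫ - ⟪Φ i, m • v⟫) ^ 2 = (1 - m) ^ 2 * ∑ i, ⟪Φ i, v⟫ ^ 2 := by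
    rw [Finset.mul_sum]
    exact Finset.sum_congr rfl fun i _ => by rw [inner_smul_right]; ring
  rw [hres, norm_smul, mul_pow, Real.norm_eq_abs, sq_abs] at hsq
  have hdist : 0 ≤ c * ‖m • v - ridge Φ c fun i => ⟪Φ i, v⟫‖ ^ 2 := by positivity
  have hfit : 0 ≤ ∑ i, ⟪Φ i, m • v - ridge Φ c fun i => ⟪Φ i, v⟫⟫ ^ 2 := by positivity
  refine le_of_mul_le_mul_left ?_ hc
  rw [mul_add, ← mul_assoc c (_ / c), mul_div_cancel₀ _ hc.ne']
  linarith

theorem ridgeHat_apply (Φ : ι → H) (c : ℝ) (i j : ι) :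
    ridgeHat Φ c i j = ⟪Φ i, ridge Φ c (Pi.single j 1)⟫ := by
  rw [inner_ridge, Matrix.mulVec_single_one, Matrix.col_apply]

theorem sq_ridgeHat_le (Φ : ι → H) (hc : 0 < c) (i j : ι) :
    ridgeHat Φ c i j ^ 2 ≤ ridgeHat Φ c j j := by
  have henergy := ridge_energy Φ hc (Pi.single j 1)
  rw [single_one_dotProduct, Matrix.mulVec_single_one, Matrix.col_apply] at henergy
  have hcol : ridgeHat Φ c i j ^ 2 ≤ ∑ l, ⟪Φ l, ridge Φ c (Pi.single j 1)⟫ ^ 2 := by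
    rw [ridgeHat_apply]
    exact Finset.single_le_sum (f := fun l => ⟪Φ l, ridge Φ c (Pi.single j 1)⟫ ^ 2)
      (fun l _ => sq_nonneg _) (Finset.mem_univ i)
  nlinarith [mul_nonneg hc.le (sq_nonneg ‖ridge Φ c (Pi.single j 1)‖)]

theorem ridgeHat_self_nonneg (Φ : ι → H) (hc : 0 < c) (i : ι) : 0 ≤ ridgeHat Φ c i i :=
  (sq_nonneg _).trans (sq_ridgeHat_le Φ hc i i)

theorem abs_ridgeHat_le_one (Φ : ι → H) (hc : 0 < c) (i j : ι) : |ridgeHat Φ c i j| ≤ 1 := by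
  have hdiag : ridgeHat Φ c j j ≤ 1 := by
    nlinarith [sq_ridgeHat_le Φ hc j j, ridgeHat_self_nonneg Φ hc j]
  exact abs_le_one_iff_mul_self_le_one.2 (by nlinarith [sq_ridgeHat_le Φ hc i j])

theorem dotProduct_ridgeHat_nonneg (Φ : ι → H) (hc : 0 < c) (y : ι → ℝ) :
    0 ≤ y ⬝ᵥ ridgeHat Φ c *ᵥ y := by
  rw [← ridge_energy Φ hc y]
  positivity

theorem hasSum_leverage {κ : Type*} {v : κ → H} (c : ℝ)
    (hΦ : ∀ i, HasSum (fun k => ⟪Φ i, v k⟫ • v k) (Φ i)) :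
    HasSum (fun k => (fun i => ⟪Φ i, v k⟫) ⬝ᵥ ridgeCoef Φ c fun i => ⟪Φ i, v k⟫)
      (ridgeHat Φ c).trace := by
  set R := (Matrix.gram ℝ Φ + c • 1)⁻¹ with hR
  have hgram (i j : ι) : HasSum (fun k => ⟪Φ i, v k⟫ * ⟪Φ j, v k⟫) (Matrix.gram ℝ Φ i j) := by
    simpa only [Matrix.gram_apply, innerSL_apply_apply, inner_smul_right, real_inner_comm,
      mul_comm] using (hΦ j).mapL (innerSL ℝ (Φ i))
  have htrace : (ridgeHat Φ c).trace = ∑ i, ∑ j, Matrix.gram ℝ Φ i j * R j i := by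
    simp only [Matrix.trace, Matrix.diag_apply, ridgeHat, Matrix.mul_apply, hR]
  have hleverage (k : κ) : ((fun i => ⟪Φ i, v k⟫) ⬝ᵥ ridgeCoef Φ c fun i => ⟪Φ i, v k⟫) =
      ∑ j, ∑ i, ⟪Φ i, v k⟫ * ⟪Φ j, v k⟫ * R j i := by
    simp only [dotProduct, ridgeCoef, Matrix.mulVec_apply_eq_sum, Finset.mul_sum, ← hR]
    exact Finset.sum_congr rfl fun j _ => Finset.sum_congr rfl fun i _ => by ring
  simp only [htrace, hleverage]
  rw [Finset.sum_comm]
  exact hasSum_sum fun j _ => hasSum_sum fun i _ => (hgram i j).mul_right (R j i)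

end Ridge

section RidgeContinuity

open scoped Matrix

variable {ι H : Type*} [NormedAddCommGroup H] [InnerProductSpace ℝ H]

theorem continuous_gram : Continuous fun Φ : ι → H => Matrix.gram ℝ Φ :=
  continuous_matrix fun i j => by simp only [Matrix.gram_apply]; fun_prop

variable [Fintype ι] [DecidableEq ι] {c : ℝ}

theorem continuous_gram_add_smul_one_inv (hc : 0 < c) :
    Continuous fun Φ : ι → H => (Matrix.gram ℝ Φ + c • 1)⁻¹ := by
  have hgram : Continuous fun Φ : ι → H => Matrix.gram ℝ Φ + c • 1 :=
    continuous_gram.add continuous_const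
  simp only [Matrix.inv_def, Ring.inverse_eq_inv']
  exact (hgram.matrix_det.inv₀ fun Φ => (isUnit_det_gram_add_smul_one Φ hc).ne_zero).smul
    hgram.matrix_adjugate

theorem continuous_ridgeHat (hc : 0 < c) : Continuous fun Φ : ι → H => ridgeHat Φ c :=
  continuous_gram.matrix_mul (continuous_gram_add_smul_one_inv hc)

theorem continuous_leverage (hc : 0 < c) (v : H) :
    Continuous fun Φ : ι → H => (fun i => ⟪Φ i, v⟫) ⬝ᵥ ridgeCoef Φ c fun i => ⟪Φ i, v⟫ := by
  have hcoord : Continuous fun (Φ : ι → H) i => ⟪Φ i, v⟫ := by fun_prop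
  exact hcoord.dotProduct ((continuous_gram_add_smul_one_inv hc).matrix_mulVec hcoord)

end RidgeContinuity

section ExpectedTrace

open scoped Matrix

variable {ι H D Ω : Type*} [NormedAddCommGroup H]
  [TopologicalSpace D] [SecondCountableTopology D] [MeasurableSpace D] [BorelSpace D]
  {mΩ : MeasurableSpace Ω} {μ : Measure Ω} {ν : Measure D}
  {Φ : D → H} {zs : ι → Ω → D} {c lam : ℝ}

theorem measurable_comp_sample [Countable ι] {E : Type*} [TopologicalSpace E]
    [MeasurableSpace E] [BorelSpace E] {F : (ι → H) → E} (hF : Continuous F) (hΦ : Continuous Φ)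
    (hzs : ∀ i, Measurable (zs i)) : Measurable fun ω => F fun i => Φ (zs i ω) :=
  (hF.comp (by fun_prop : Continuous fun (z : ι → D) i => Φ (z i))).measurable.comp
    (measurable_pi_iff.2 hzs)

variable [Fintype ι] [DecidableEq ι] [InnerProductSpace ℝ H] [IsProbabilityMeasure μ]

theorem integrable_leverage (hΦ : Continuous Φ) (hzs : ∀ i, Measurable (zs i)) (hc : 0 < c)
    (v : H) : Integrable (fun ω => (fun i => ⟪Φ (zs i ω), v⟫) ⬝ᵥ
      ridgeCoef (fun i => Φ (zs i ω)) c fun i => ⟪Φ (zs i ω), v⟫) μ := by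
  refine .of_bound (measurable_comp_sample (continuous_leverage hc v) hΦ hzs).aestronglyMeasurable
    (‖v‖ ^ 2) (.of_forall fun ω => ?_)
  rw [Real.norm_of_nonneg (dotProduct_ridgeCoef_nonneg _ hc _)]
  simpa using dotProduct_ridgeCoef_le (fun i => Φ (zs i ω)) hc v 1

theorem integral_leverage_le [Nonempty ι] (hΦ : Continuous Φ)
    (hzs : ∀ i, MeasurePreserving (zs i) μ ν) (hlam : 0 < lam) {v : H}
    (hint : Integrable (fun z => ⟪Φ z, v⟫ ^ 2) ν) (m : ℝ) :
    ∫ ω, (fun i => ⟪Φ (zs i ω), v⟫) ⬝ᵥ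
        ridgeCoef (fun i => Φ (zs i ω)) (Fintype.card ι * lam) (fun i => ⟪Φ (zs i ω), v⟫) ∂μ
      ≤ m ^ 2 * ‖v‖ ^ 2 + (1 - m) ^ 2 / lam * ∫ z, ⟪Φ z, v⟫ ^ 2 ∂ν := by
  have hcard : (0 : ℝ) < Fintype.card ι := by exact_mod_cast Fintype.card_pos
  have hc : 0 < Fintype.card ι * lam := mul_pos hcard hlam
  have hsq_int (i : ι) : Integrable (fun ω => ⟪Φ (zs i ω), v⟫ ^ 2) μ :=
    (hzs i).integrable_comp_of_integrable hint
  have hsq (i : ι) : ∫ ω, ⟪Φ (zs i ω), v⟫ ^ 2 ∂μ = ∫ z, ⟪Φ z, v⟫ ^ 2 ∂ν := by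
    rw [← (hzs i).map_eq, integral_map (hzs i).aemeasurable]
    exact (by fun_prop : Continuous fun z => ⟪Φ z, v⟫ ^ 2).aestronglyMeasurable
  have hsum_int := (integrable_finsetSum Finset.univ fun i _ => hsq_int i).const_mul
    ((1 - m) ^ 2 / (Fintype.card ι * lam))
  calc _ ≤ ∫ ω, (m ^ 2 * ‖v‖ ^ 2 +
          (1 - m) ^ 2 / (Fintype.card ι * lam) * ∑ i, ⟪Φ (zs i ω), v⟫ ^ 2) ∂μ :=
        integral_mono (integrable_leverage hΦ (fun i => (hzs i).measurable) hc v)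
          ((integrable_const _).add hsum_int)
          fun ω => dotProduct_ridgeCoef_le (fun i => Φ (zs i ω)) hc v m
    _ = m ^ 2 * ‖v‖ ^ 2 + (1 - m) ^ 2 / (Fintype.card ι * lam) *
          (Fintype.card ι * ∫ z, ⟪Φ z, v⟫ ^ 2 ∂ν) := by
        rw [integral_add (integrable_const _) hsum_int, integral_const, probReal_univ, one_smul,
          integral_const_mul, integral_finsetSum _ fun i _ => hsq_int i,
          Finset.sum_congr rfl fun i _ => hsq i, Finset.sum_const, Finset.card_univ, nsmul_eq_mul]
    _ = _ := by field_simp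

theorem integral_leverage_le_div [Nonempty ι] (hΦ : Continuous Φ)
    (hzs : ∀ i, MeasurePreserving (zs i) μ ν) (hlam : 0 < lam) {v : H} (hv : ‖v‖ ≤ 1)
    (hint : Integrable (fun z => ⟪Φ z, v⟫ ^ 2) ν) :
    ∫ ω, (fun i => ⟪Φ (zs i ω), v⟫) ⬝ᵥ
        ridgeCoef (fun i => Φ (zs i ω)) (Fintype.card ι * lam) (fun i => ⟪Φ (zs i ω), v⟫) ∂μ
      ≤ (∫ z, ⟪Φ z, v⟫ ^ 2 ∂ν) / (∫ z, ⟪Φ z, v⟫ ^ 2 ∂ν + lam) := by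
  have hle := integral_leverage_le hΦ hzs hlam hint
  set σ := ∫ z, ⟪Φ z, v⟫ ^ 2 ∂ν
  have hσ : 0 < σ + lam := add_pos_of_nonneg_of_pos (integral_nonneg fun z => sq_nonneg _) hlam
  have hv2 : ‖v‖ ^ 2 ≤ 1 := pow_le_one₀ (norm_nonneg _) hv
  -- this shrinkage factor minimises the bound
  set m := σ / (σ + lam) with hm
  calc _ ≤ m ^ 2 * ‖v‖ ^ 2 + (1 - m) ^ 2 / lam * σ := hle m
    _ ≤ m ^ 2 * 1 + (1 - m) ^ 2 / lam * σ := by gcongr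
    _ = m := by
      rw [hm]
      field_simp
      ring

theorem integral_trace_ridgeHat_le [Nonempty ι] (hΦ : Continuous Φ)
    (hzs : ∀ i, MeasurePreserving (zs i) μ ν) (hlam : 0 < lam)
    {κ : Type*} [Countable κ] {v : κ → H} (hv : ∀ k, ‖v k‖ ≤ 1)
    (hint : ∀ k, Integrable (fun z => ⟪Φ z, v k⟫ ^ 2) ν)
    (hexp : ∀ᵐ z ∂ν, HasSum (fun k => ⟪Φ z, v k⟫ • v k) (Φ z))
    (hsum : Summable fun k =>
      (∫ z, ⟪Φ z, v k⟫ ^ 2 ∂ν) / (∫ z, ⟪Φ z, v k⟫ ^ 2 ∂ν + lam)) :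
    ∫ ω, (ridgeHat (fun i => Φ (zs i ω)) (Fintype.card ι * lam)).trace ∂μ ≤
      ∑' k, (∫ z, ⟪Φ z, v k⟫ ^ 2 ∂ν) / (∫ z, ⟪Φ z, v k⟫ ^ 2 ∂ν + lam) := by
  have hc : 0 < Fintype.card ι * lam :=
    mul_pos (by exact_mod_cast Fintype.card_pos) hlam
  set lev : κ → Ω → ℝ := fun k ω => (fun i => ⟪Φ (zs i ω), v k⟫) ⬝ᵥ
    ridgeCoef (fun i => Φ (zs i ω)) (Fintype.card ι * lam) fun i => ⟪Φ (zs i ω), v k⟫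
  have hlev_nonneg (k : κ) (ω : Ω) : 0 ≤ lev k ω := dotProduct_ridgeCoef_nonneg _ hc _
  have hlev_int (k : κ) : Integrable (lev k) μ :=
    integrable_leverage hΦ (fun i => (hzs i).measurable) hc (v k)
  have hlev_le (k : κ) := integral_leverage_le_div hΦ hzs hlam (hv k) (hint k)
  have hlev_sum : Summable fun k => ∫ ω, lev k ω ∂μ :=
    hsum.of_nonneg_of_le (fun k => integral_nonneg (hlev_nonneg k)) hlev_le
  have htrace : ∀ᵐ ω ∂μ, HasSum (fun k => lev k ω)
      (ridgeHat (fun i => Φ (zs i ω)) (Fintype.card ι * lam)).trace := by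
    filter_upwards [ae_all_iff.2 fun i => (hzs i).quasiMeasurePreserving.ae hexp] with ω hω
    exact hasSum_leverage _ hω
  calc ∫ ω, (ridgeHat (fun i => Φ (zs i ω)) (Fintype.card ι * lam)).trace ∂μ
      = ∫ ω, ∑' k, lev k ω ∂μ := integral_congr_ae (htrace.mono fun ω hω => hω.tsum_eq.symm)
    _ = ∑' k, ∫ ω, lev k ω ∂μ :=
        (integral_tsum_of_summable_integral_norm hlev_int (by
          simpa only [Real.norm_of_nonneg (hlev_nonneg _ _)] using hlev_sum)).symm
    _ ≤ _ := hlev_sum.tsum_le_tsum hlev_le hsum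

end ExpectedTrace

/-- `ξ` has conditional mean zero given `π` under `P`, expressed by orthogonality to the bounded
measurable functions of `π`. -/
def CondMeanZero {W D : Type*} [MeasurableSpace W] [MeasurableSpace D] (P : Measure W)
    (π : W → D) (ξ : W → ℝ) : Prop :=
  ∀ ψ : D → ℝ, Measurable ψ → ∀ K : ℝ, (∀ z, |ψ z| ≤ K) → ∫ w, ξ w * ψ (π w) ∂P = 0

section Noise

open scoped Matrix

variable {ι H D W Ω : Type*} [MeasurableSpace D] [MeasurableSpace W]
  {mΩ : MeasurableSpace Ω} {μ : Measure Ω} [IsProbabilityMeasure μ] {P : Measure W}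
  {π : W → D} {ξ : W → ℝ} {C : ℝ}

theorem CondMeanZero.integral_mul_eq_zero_of_indepFun {V : Type*} [MeasurableSpace V]
    {A : Ω → W} {B : Ω → V} (hmean : CondMeanZero P π ξ) (hA : MeasurePreserving A μ P)
    (hB : Measurable B) (hAB : A ⟂ᵢ[μ] B) (hπ : Measurable π) (hξ : Measurable ξ)
    (hξC : ∀ w, |ξ w| ≤ C) {F : D × V → ℝ} (hF : Measurable F) {K : ℝ} (hFK : ∀ p, |F p| ≤ K) :
    ∫ ω, ξ (A ω) * F (π (A ω), B ω) ∂μ = 0 := by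
  have hP : IsProbabilityMeasure P := hA.map_eq ▸ Measure.isProbabilityMeasure_map hA.aemeasurable
  have : IsProbabilityMeasure (μ.map B) := Measure.isProbabilityMeasure_map hB.aemeasurable
  have hmap : μ.map (fun ω => (A ω, B ω)) = P.prod (μ.map B) := by
    rw [(indepFun_iff_map_prod_eq_prod_map_map hA.aemeasurable hB.aemeasurable).1 hAB, hA.map_eq]
  set g : W × V → ℝ := fun p => ξ p.1 * F (π p.1, p.2)
  have hg : Measurable g := by fun_prop
  have hg_int : Integrable g (P.prod (μ.map B)) := by
    refine .of_bound hg.aestronglyMeasurable (C * K) (.of_forall fun p => ?_)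
    rw [Real.norm_eq_abs, abs_mul]
    exact mul_le_mul (hξC _) (hFK _) (abs_nonneg _) ((abs_nonneg _).trans (hξC p.1))
  calc ∫ ω, ξ (A ω) * F (π (A ω), B ω) ∂μ = ∫ p, g p ∂(P.prod (μ.map B)) := by
        rw [← hmap, integral_map (hA.measurable.prodMk hB).aemeasurable hg.aestronglyMeasurable]
    _ = ∫ b, ∫ a, ξ a * F (π a, b) ∂P ∂(μ.map B) := integral_prod_symm _ hg_int
    _ = 0 := integral_eq_zero_of_ae (.of_forall fun b =>
        hmean (fun z => F (z, b)) (by fun_prop) K fun z => hFK _)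

variable {S : ι → Ω → W}

theorem CondMeanZero.integral_mul_mul_eq_zero_of_iIndepFun [Finite ι]
    (hmean : CondMeanZero P π ξ) (hS : ∀ i, MeasurePreserving (S i) μ P) (hind : iIndepFun S μ)
    (hπ : Measurable π) (hξ : Measurable ξ) (hξC : ∀ w, |ξ w| ≤ C) {F : (ι → D) → ℝ}
    (hF : Measurable F) {K : ℝ} (hFK : ∀ z, |F z| ≤ K) {i j : ι} (hij : j ≠ i) :
    ∫ ω, ξ (S i ω) * (ξ (S j ω) * F fun l => π (S l ω)) ∂μ = 0 := by
  classical
  have := Fintype.ofFinite ι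
  let B : Ω → ({i}ᶜ : Finset ι) → W := fun ω l => S l ω
  have hB : Measurable B := measurable_pi_iff.2 fun l => (hS l).measurable
  have hSB : S i ⟂ᵢ[μ] B :=
    (hind.indepFun_finset {i} {i}ᶜ disjoint_compl_right fun l => (hS l).measurable).comp
      (measurable_pi_apply (⟨i, Finset.mem_singleton_self i⟩ : ({i} : Finset ι))) measurable_id
  let glue : D × (({i}ᶜ : Finset ι) → W) → ι → D := fun p l =>
    if h : l = i then p.1 else π (p.2 ⟨l, by simpa using h⟩)
  have hglue : Measurable glue := by
    refine measurable_pi_iff.2 fun l => ?_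
    by_cases h : l = i
    · simpa only [glue, h, dif_pos] using measurable_fst
    · simp only [glue, h, dif_neg, not_false_eq_true]
      fun_prop
  have hglue_eq (ω : Ω) : glue (π (S i ω), B ω) = fun l => π (S l ω) := by
    funext l
    by_cases h : l = i <;> simp [glue, B, h]
  have hj : j ∈ ({i}ᶜ : Finset ι) := by simpa using hij
  have hzero := hmean.integral_mul_eq_zero_of_indepFun (hS i) hB hSB hπ hξ hξC
    (F := fun p => ξ (p.2 ⟨j, hj⟩) * F (glue p)) (by fun_prop) (K := C * K) fun p => by
      rw [abs_mul]
      exact mul_le_mul (hξC _) (hFK _) (abs_nonneg _) ((abs_nonneg _).trans (hξC (p.2 ⟨j, hj⟩)))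
  simpa only [hglue_eq] using hzero

variable [Fintype ι]

theorem dotProduct_mulVec_eq_sum (M : Matrix ι ι ℝ) (x : ι → ℝ) :
    x ⬝ᵥ M *ᵥ x = ∑ i, ∑ j, x i * (x j * M i j) := by
  simp only [dotProduct, Matrix.mulVec_apply_eq_sum, Finset.mul_sum, mul_comm (M _ _)]

variable [DecidableEq ι] [NormedAddCommGroup H] [InnerProductSpace ℝ H]
  [TopologicalSpace D] [SecondCountableTopology D] [BorelSpace D] {Φ : D → H} {c : ℝ}

theorem integrable_ridgeHat (hΦ : Continuous Φ) {zs : ι → Ω → D} (hzs : ∀ i, Measurable (zs i))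
    (hc : 0 < c) (i j : ι) : Integrable (fun ω => ridgeHat (fun l => Φ (zs l ω)) c i j) μ :=
  .of_bound (measurable_comp_sample ((continuous_ridgeHat hc).matrix_elem i j) hΦ
    hzs).aestronglyMeasurable 1 (.of_forall fun _ => abs_ridgeHat_le_one _ hc i j)

theorem integrable_noise_ridgeHat (hΦ : Continuous Φ) (hS : ∀ i, Measurable (S i))
    (hπ : Measurable π) (hξ : Measurable ξ) (hξC : ∀ w, |ξ w| ≤ C) (hc : 0 < c) (i j : ι) :
    Integrable (fun ω => ξ (S i ω) * (ξ (S j ω) *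
      ridgeHat (fun l => Φ (π (S l ω))) c i j)) μ := by
  have hbdd (l : ι) : ∀ᵐ ω ∂μ, ‖ξ (S l ω)‖ ≤ C := .of_forall fun ω => hξC _
  exact ((integrable_ridgeHat hΦ (fun l => hπ.comp (hS l)) hc i j).bdd_mul
    (hξ.comp (hS j)).aestronglyMeasurable (hbdd j)).bdd_mul
    (hξ.comp (hS i)).aestronglyMeasurable (hbdd i)

theorem integrable_noise_energy (hΦ : Continuous Φ) (hS : ∀ i, Measurable (S i))
    (hπ : Measurable π) (hξ : Measurable ξ) (hξC : ∀ w, |ξ w| ≤ C) (hc : 0 < c) :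
    Integrable (fun ω => (fun i => ξ (S i ω)) ⬝ᵥ
      ridgeHat (fun i => Φ (π (S i ω))) c *ᵥ fun i => ξ (S i ω)) μ := by
  simp only [dotProduct_mulVec_eq_sum]
  exact integrable_finsetSum _ fun i _ => integrable_finsetSum _ fun j _ =>
    integrable_noise_ridgeHat hΦ hS hπ hξ hξC hc i j

theorem CondMeanZero.integral_noise_energy_le (hmean : CondMeanZero P π ξ) (hΦ : Continuous Φ)
    (hS : ∀ i, MeasurePreserving (S i) μ P) (hind : iIndepFun S μ) (hπ : Measurable π)
    (hξ : Measurable ξ) (hξC : ∀ w, |ξ w| ≤ C) (hc : 0 < c) :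
    ∫ ω, (fun i => ξ (S i ω)) ⬝ᵥ
        ridgeHat (fun i => Φ (π (S i ω))) c *ᵥ (fun i => ξ (S i ω)) ∂μ ≤
      C ^ 2 * ∫ ω, (ridgeHat (fun i => Φ (π (S i ω))) c).trace ∂μ := by
  set E : Ω → Matrix ι ι ℝ := fun ω => ridgeHat (fun i => Φ (π (S i ω))) c
  have hE_int (i : ι) : Integrable (fun ω => E ω i i) μ :=
    integrable_ridgeHat hΦ (fun i => hπ.comp (hS i).measurable) hc i i
  have hint (i j : ι) : Integrable (fun ω => ξ (S i ω) * (ξ (S j ω) * E ω i j)) μ :=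
    integrable_noise_ridgeHat hΦ (fun i => (hS i).measurable) hπ hξ hξC hc i j
  have hoff (i j : ι) (hij : j ≠ i) : ∫ ω, ξ (S i ω) * (ξ (S j ω) * E ω i j) ∂μ = 0 :=
    hmean.integral_mul_mul_eq_zero_of_iIndepFun hS hind hπ hξ hξC
      (measurable_comp_sample ((continuous_ridgeHat hc).matrix_elem i j) hΦ measurable_pi_apply)
      (fun z => abs_ridgeHat_le_one _ hc i j) hij
  have hdiag (i : ι) (ω : Ω) : ξ (S i ω) * (ξ (S i ω) * E ω i i) ≤ C ^ 2 * E ω i i := by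
    rw [← mul_assoc, ← sq]
    exact mul_le_mul_of_nonneg_right (sq_le_sq' (abs_le.1 (hξC _)).1 (abs_le.1 (hξC _)).2)
      (ridgeHat_self_nonneg _ hc i)
  calc ∫ ω, (fun i => ξ (S i ω)) ⬝ᵥ E ω *ᵥ (fun i => ξ (S i ω)) ∂μ
      = ∑ i, ∑ j, ∫ ω, ξ (S i ω) * (ξ (S j ω) * E ω i j) ∂μ := by
        simp only [dotProduct_mulVec_eq_sum]
        rw [integral_finsetSum _ fun i _ => integrable_finsetSum _ fun j _ => hint i j]
        exact Finset.sum_congr rfl fun i _ => integral_finsetSum _ fun j _ => hint i j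
    _ = ∑ i, ∫ ω, ξ (S i ω) * (ξ (S i ω) * E ω i i) ∂μ :=
        Finset.sum_congr rfl fun i _ => Finset.sum_eq_single i (fun j _ => hoff i j) (by simp)
    _ ≤ ∑ i, ∫ ω, C ^ 2 * E ω i i ∂μ := Finset.sum_le_sum fun i _ =>
        integral_mono (hint i i) ((hE_int i).const_mul _) (hdiag i)
    _ = C ^ 2 * ∫ ω, (E ω).trace ∂μ := by
        simp only [integral_const_mul, ← Finset.mul_sum, Matrix.trace, Matrix.diag_apply]
        rw [integral_finsetSum _ fun i _ => hE_int i]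

end Noise

/-! ### Empirical second moments of a feature map -/

section WeightedSums

variable {ι G D Ω : Type*} [NormedAddCommGroup G] [InnerProductSpace ℝ G] {Ψ : D → G} {B : ℝ}

theorem norm_sum_smul_sq (s : Finset ι) (w : ι → ℝ) (x : ι → G) :
    ‖∑ i ∈ s, w i • x i‖ ^ 2 = ∑ i ∈ s, ∑ j ∈ s, w i * w j * ⟪x i, x j⟫ := by
  rw [← real_inner_self_eq_norm_sq, sum_inner]
  simp only [inner_sum, real_inner_smul_left, real_inner_smul_right]
  exact Finset.sum_congr rfl fun i _ => Finset.sum_congr rfl fun j _ => by ring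

theorem sum_mul_eq_of_sum_eq_zero [DecidableEq ι] {s : Finset ι} {w : ι → ℝ}
    (hw : ∑ i ∈ s, w i = 0) (a b : ℝ) :
    ∑ i ∈ s, ∑ j ∈ s, w i * w j * (if i = j then a else b) = (a - b) * ∑ i ∈ s, w i ^ 2 := by
  have hsplit (i j : ι) : w i * w j * (if i = j then a else b) =
      (if i = j then (a - b) * w i ^ 2 else 0) + b * (w i * w j) := by
    split_ifs with h
    · rw [h]; ring
    · ring
  simp only [hsplit, Finset.sum_add_distrib, Finset.sum_ite_eq, ← Finset.mul_sum, hw, mul_zero,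
    add_zero, Finset.sum_ite_mem, Finset.inter_self]

theorem abs_inner_le_sq (hB : ∀ z, ‖Ψ z‖ ≤ B) (z z' : D) : |⟪Ψ z, Ψ z'⟫| ≤ B ^ 2 :=
  (abs_real_inner_le_norm _ _).trans <| (mul_le_mul (hB z) (hB z') (norm_nonneg _)
    ((norm_nonneg _).trans (hB z))).trans_eq (sq B).symm

variable [TopologicalSpace D] [SecondCountableTopology D] [MeasurableSpace D] [BorelSpace D]
  {mΩ : MeasurableSpace Ω} {μ : Measure Ω} [IsProbabilityMeasure μ] {ν : Measure D}
  {zs : ι → Ω → D}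

theorem integrable_inner_sample (hΨ : Continuous Ψ) (hB : ∀ z, ‖Ψ z‖ ≤ B)
    (hzs : ∀ i, Measurable (zs i)) (i j : ι) :
    Integrable (fun ω => ⟪Ψ (zs i ω), Ψ (zs j ω)⟫) μ := by
  have hcont : Continuous fun p : D × D => ⟪Ψ p.1, Ψ p.2⟫ := by fun_prop
  exact .of_bound (hcont.measurable.comp ((hzs i).prodMk (hzs j))).aestronglyMeasurable
    (B ^ 2) (.of_forall fun _ => abs_inner_le_sq hB _ _)

theorem integral_inner_sample [DecidableEq ι] (hΨ : Continuous Ψ)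
    (hzs : ∀ i, MeasurePreserving (zs i) μ ν)
    (hind : Pairwise fun i j => zs i ⟂ᵢ[μ] zs j) (i j : ι) :
    ∫ ω, ⟪Ψ (zs i ω), Ψ (zs j ω)⟫ ∂μ =
      if i = j then ∫ z, ⟪Ψ z, Ψ z⟫ ∂ν else ∫ p, ⟪Ψ p.1, Ψ p.2⟫ ∂(ν.prod ν) := by
  split_ifs with hij
  · subst hij
    rw [← (hzs i).map_eq, integral_map (hzs i).aemeasurable]
    exact (by fun_prop : Continuous fun z => ⟪Ψ z, Ψ z⟫).aestronglyMeasurable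
  · have hmap : μ.map (fun ω => (zs i ω, zs j ω)) = ν.prod ν := by
      rw [(indepFun_iff_map_prod_eq_prod_map_map (hzs i).aemeasurable
        (hzs j).aemeasurable).1 (hind hij), (hzs i).map_eq, (hzs j).map_eq]
    rw [← hmap, integral_map ((hzs i).measurable.prodMk (hzs j).measurable).aemeasurable]
    exact (by fun_prop : Continuous fun p : D × D => ⟪Ψ p.1, Ψ p.2⟫).aestronglyMeasurable

theorem integrable_norm_sum_smul_sq (hΨ : Continuous Ψ) (hB : ∀ z, ‖Ψ z‖ ≤ B)
    (hzs : ∀ i, Measurable (zs i)) (s : Finset ι) (w : ι → ℝ) :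
    Integrable (fun ω => ‖∑ i ∈ s, w i • Ψ (zs i ω)‖ ^ 2) μ := by
  simp only [norm_sum_smul_sq]
  exact integrable_finsetSum _ fun i _ => integrable_finsetSum _ fun j _ =>
    (integrable_inner_sample hΨ hB hzs i j).const_mul _

theorem integral_norm_sum_smul_sq_le (hΨ : Continuous Ψ) (hB : ∀ z, ‖Ψ z‖ ≤ B)
    (hzs : ∀ i, MeasurePreserving (zs i) μ ν) (hind : Pairwise fun i j => zs i ⟂ᵢ[μ] zs j)
    {s : Finset ι} {w : ι → ℝ} (hw : ∑ i ∈ s, w i = 0) :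
    ∫ ω, ‖∑ i ∈ s, w i • Ψ (zs i ω)‖ ^ 2 ∂μ ≤ 2 * B ^ 2 * ∑ i ∈ s, w i ^ 2 := by
  classical
  obtain rfl | ⟨i, -⟩ := s.eq_empty_or_nonempty
  · simp
  have hν : IsProbabilityMeasure ν :=
    (hzs i).map_eq ▸ Measure.isProbabilityMeasure_map (hzs i).aemeasurable
  have hint (i j : ι) : Integrable (fun ω => w i * w j * ⟪Ψ (zs i ω), Ψ (zs j ω)⟫) μ :=
    (integrable_inner_sample hΨ hB (fun i => (hzs i).measurable) i j).const_mul _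
  have hsplit : ∫ ω, ‖∑ i ∈ s, w i • Ψ (zs i ω)‖ ^ 2 ∂μ =
      (∫ z, ⟪Ψ z, Ψ z⟫ ∂ν - ∫ p, ⟪Ψ p.1, Ψ p.2⟫ ∂(ν.prod ν)) * ∑ i ∈ s, w i ^ 2 := by
    simp only [norm_sum_smul_sq]
    rw [integral_finsetSum _ fun i _ => integrable_finsetSum _ fun j _ => hint i j,
      ← sum_mul_eq_of_sum_eq_zero hw]
    refine Finset.sum_congr rfl fun i _ => ?_
    rw [integral_finsetSum _ fun j _ => hint i j]
    simp only [integral_const_mul, integral_inner_sample hΨ hzs hind]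
  rw [hsplit]
  refine mul_le_mul_of_nonneg_right ?_ (Finset.sum_nonneg fun i _ => sq_nonneg _)
  have hdiag : |∫ z, ⟪Ψ z, Ψ z⟫ ∂ν| ≤ B ^ 2 := by
    simpa using norm_integral_le_of_norm_le_const (μ := ν) (f := fun z => ⟪Ψ z, Ψ z⟫)
      (.of_forall fun z => abs_inner_le_sq hB z z)
  have hoff : |∫ p, ⟪Ψ p.1, Ψ p.2⟫ ∂(ν.prod ν)| ≤ B ^ 2 := by
    simpa using norm_integral_le_of_norm_le_const (μ := ν.prod ν)
      (f := fun p => ⟪Ψ p.1, Ψ p.2⟫)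
      (.of_forall fun p => abs_inner_le_sq hB p.1 p.2)
  linarith [abs_le.1 hdiag, abs_le.1 hoff]

end WeightedSums

section SampleSplit

open scoped TensorProduct

/-- The weights turning a mean over the first `r` indices into a mean over the first `n`. -/
def splitWeight (n r i : ℕ) : ℝ := (n : ℝ)⁻¹ - if i < r then (r : ℝ)⁻¹ else 0

variable {n r : ℕ}

theorem sum_range_ite_lt (hrn : r ≤ n) (x : ℕ → ℝ) :
    ∑ i ∈ Finset.range n, (if i < r then x i else 0) = ∑ i ∈ Finset.range r, x i := by
  rw [← Finset.sum_filter]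
  congr 1
  grind

theorem sum_splitWeight_mul (hrn : r ≤ n) (x : ℕ → ℝ) :
    ∑ i ∈ Finset.range n, splitWeight n r i * x i =
      (n : ℝ)⁻¹ * ∑ i ∈ Finset.range n, x i - (r : ℝ)⁻¹ * ∑ i ∈ Finset.range r, x i := by
  simp only [splitWeight, sub_mul, ite_mul, zero_mul, Finset.sum_sub_distrib, Finset.mul_sum]
  rw [sum_range_ite_lt hrn]

theorem sum_splitWeight (hr : 0 < r) (hrn : r ≤ n) :
    ∑ i ∈ Finset.range n, splitWeight n r i = 0 := by
  have hr' : (r : ℝ) ≠ 0 := by positivity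
  have hn' : (n : ℝ) ≠ 0 := by exact_mod_cast (hr.trans_le hrn).ne'
  simpa [hr', hn'] using sum_splitWeight_mul hrn fun _ => 1

theorem sum_splitWeight_sq_le (hr : 0 < r) (hrn : r ≤ n) :
    ∑ i ∈ Finset.range n, splitWeight n r i ^ 2 ≤ (r : ℝ)⁻¹ := by
  have hr' : (r : ℝ) ≠ 0 := by positivity
  have hlast := sum_splitWeight_mul hrn (splitWeight n r)
  have hfirst : ∑ i ∈ Finset.range r, splitWeight n r i = r * ((n : ℝ)⁻¹ - (r : ℝ)⁻¹) := by
    rw [← nsmul_eq_mul, ← Finset.card_range r, ← Finset.sum_const, Finset.card_range]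
    exact Finset.sum_congr rfl fun i hi => by simp [splitWeight, Finset.mem_range.1 hi]
  simp only [← sq] at hlast
  rw [hlast, sum_splitWeight hr hrn, hfirst, mul_zero, zero_sub, ← mul_assoc, inv_mul_cancel₀ hr']
  simp

variable {H : Type*} [NormedAddCommGroup H] [InnerProductSpace ℝ H]

theorem sum_mul_inner_sq_le {ι : Type*} (s : Finset ι) (w : ι → ℝ) (Φ : ι → H) (d : H) :
    ∑ i ∈ s, w i * ⟪Φ i, d⟫ ^ 2 ≤ ‖∑ i ∈ s, w i • (Φ i ⊗ₜ[ℝ] Φ i)‖ * ‖d‖ ^ 2 := by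
  have h := real_inner_le_norm (∑ i ∈ s, w i • (Φ i ⊗ₜ[ℝ] Φ i)) (d ⊗ₜ[ℝ] d)
  simpa only [sum_inner, TensorProduct.smul_tmul', TensorProduct.inner_tmul, real_inner_smul_left,
    TensorProduct.norm_tmul, mul_assoc, ← sq] using h

/-- The excess of the second moments over the first `n` samples above those over the first `r`
is linear in `d ⊗ d`, hence bounded uniformly in `d`, even when `d` depends on the sample. -/
theorem mean_inner_sq_le (hrn : r ≤ n) (Φ : ℕ → H) (d : H) :
    (n : ℝ)⁻¹ * ∑ i ∈ Finset.range n, ⟪Φ i, d⟫ ^ 2 ≤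
      (r : ℝ)⁻¹ * ∑ i ∈ Finset.range r, ⟪Φ i, d⟫ ^ 2 +
        ‖∑ i ∈ Finset.range n, splitWeight n r i • (Φ i ⊗ₜ[ℝ] Φ i)‖ * ‖d‖ ^ 2 := by
  have h := sum_mul_inner_sq_le (Finset.range n) (splitWeight n r) Φ d
  rw [sum_splitWeight_mul hrn] at h
  linarith

end SampleSplit

/-! ### Singular systems of Hilbert–Schmidt operators -/

section CompactOperators

variable {ι E F : Type*} [NormedAddCommGroup E] [InnerProductSpace ℝ E] [NormedAddCommGroup F]
  [InnerProductSpace ℝ F]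

theorem norm_sum_inner_smul_le {v : ι → E} (hv : Orthonormal ℝ v) (y : ι → F) (s : Finset ι) :
    ‖∑ i ∈ s, (innerSL ℝ (v i)).smulRight (y i)‖ ≤ √(∑ i ∈ s, ‖y i‖ ^ 2) := by
  refine ContinuousLinearMap.opNorm_le_bound _ (Real.sqrt_nonneg _) fun x => ?_
  rw [_root_.sum_apply]
  calc ‖∑ i ∈ s, (innerSL ℝ (v i)).smulRight (y i) x‖
      ≤ ∑ i ∈ s, ‖⟪v i, x⟫‖ * ‖y i‖ :=
        (norm_sum_le _ _).trans_eq <| Finset.sum_congr rfl fun i _ => by simp [norm_smul]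
    _ ≤ √(∑ i ∈ s, ‖⟪v i, x⟫‖ ^ 2) * √(∑ i ∈ s, ‖y i‖ ^ 2) :=
        Real.sum_mul_le_sqrt_mul_sqrt _ _ _
    _ ≤ ‖x‖ * √(∑ i ∈ s, ‖y i‖ ^ 2) := by
        gcongr
        exact (Real.sqrt_le_left (norm_nonneg x)).2 (hv.sum_inner_products_le x)
    _ = _ := mul_comm _ _

theorem isCompactOperator_of_summable_norm_sq [CompleteSpace F] (b : HilbertBasis ι ℝ E)
    (A : E →L[ℝ] F) (hA : Summable fun i => ‖A (b i)‖ ^ 2) : IsCompactOperator A := by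
  let R (i : ι) : E →L[ℝ] F := (innerSL ℝ (b i)).smulRight (A (b i))
  have hR : Summable R := by
    rw [summable_iff_vanishing_norm] at hA ⊢
    intro ε hε
    obtain ⟨s, hs⟩ := hA (ε ^ 2) (by positivity)
    refine ⟨s, fun t ht => (norm_sum_inner_smul_le b.orthonormal _ t).trans_lt ?_⟩
    exact (Real.sqrt_lt' hε).2 ((le_abs_self _).trans_lt (hs t ht))
  have hRA : HasSum R A := by
    refine (hR.hasSum_iff).2 (ContinuousLinearMap.ext fun x => ?_)
    have happly : HasSum (fun i => R i x) ((∑' i, R i) x) := by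
      simpa using hR.hasSum.mapL (ContinuousLinearMap.apply ℝ F x)
    refine happly.unique ?_
    simpa [R, b.repr_apply_apply] using (b.hasSum_repr x).mapL A
  refine isCompactOperator_of_tendsto hRA (.of_forall fun s => ?_)
  refine Submodule.sum_mem (compactOperator (RingHom.id ℝ) E F) fun i _ => ?_
  exact (isCompactOperator_of_locallyCompactSpace_dom (innerSL ℝ (b i))).clm_comp
    (ContinuousLinearMap.toSpanSingleton ℝ (A (b i)))

end CompactOperators

section Eigenbasis

universe u

variable {E : Type u} [NormedAddCommGroup E] [InnerProductSpace ℝ E]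

theorem inner_eq_zero_of_forall_hilbertBasis {ι : Type*} {V : Submodule ℝ E}
    (b : HilbertBasis ι ℝ V) {x : E} (hx : ∀ i, ⟪x, (b i : E)⟫ = 0) (y : V) : ⟪x, (y : E)⟫ = 0 := by
  have h := ((b.hasSum_repr y).mapL V.subtypeL).mapL (innerSL ℝ x)
  simp only [map_smul, Submodule.subtypeL_apply, innerSL_apply_apply, hx, smul_zero] at h
  exact h.unique hasSum_zero

variable [CompleteSpace E]

theorem exists_hilbertBasis_sigma {ι : Type*} {κ : ι → Type*} {V : ι → Submodule ℝ E}
    (hV : OrthogonalFamily ℝ (fun i => V i) fun i => (V i).subtypeₗᵢ) (hbot : (⨆ i, V i)ᗮ = ⊥)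
    (b : ∀ i, HilbertBasis (κ i) ℝ (V i)) :
    ∃ B : HilbertBasis (Σ i, κ i) ℝ E, ∀ a, B a = b a.1 a.2 := by
  have hortho := hV.orthonormal_sigma_orthonormal (v_family := fun i => (b i : κ i → V i))
    fun i => (b i).orthonormal
  refine ⟨.mkOfOrthogonalEqBot hortho ?_, fun a => by
    rw [HilbertBasis.coe_mkOfOrthogonalEqBot]; rfl⟩
  rw [eq_bot_iff, ← hbot, ← Submodule.iInf_orthogonal]
  refine fun x hx => Submodule.mem_iInf _ |>.2 fun i => (Submodule.mem_orthogonal' _ _).2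
    fun y hy => inner_eq_zero_of_forall_hilbertBasis (b i) (fun a => ?_) ⟨y, hy⟩
  exact (Submodule.mem_orthogonal' _ _).1 hx _ (Submodule.subset_span ⟨⟨i, a⟩, rfl⟩)

theorem exists_eigenbasis {L : E →L[ℝ] E} (hc : IsCompactOperator L)
    (hsymm : (L : E →ₗ[ℝ] E).IsSymmetric) :
    ∃ (ι : Type u) (b : HilbertBasis ι ℝ E) (s : ι → ℝ), ∀ i, L (b i) = s i • b i := by
  have hcomplete (m : ℝ) : CompleteSpace (Module.End.eigenspace (L : E →ₗ[ℝ] E) m) := by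
    refine IsClosed.completeSpace_coe (hs := ?_)
    have heq : (Module.End.eigenspace (L : E →ₗ[ℝ] E) m : Set E) = {x | L x = m • x} := by
      ext x; simp
    exact heq ▸ isClosed_eq L.continuous (continuous_const_smul m)
  choose w b _ using fun m => exists_hilbertBasis ℝ (Module.End.eigenspace (L : E →ₗ[ℝ] E) m)
  obtain ⟨B, hB⟩ := exists_hilbertBasis_sigma hsymm.orthogonalFamily_eigenspaces
    (ContinuousLinearMap.orthogonalComplement_iSup_eigenspaces_eq_bot hc hsymm) b
  exact ⟨_, B, fun a => a.1, fun a => hB a ▸ Module.End.mem_eigenspace_iff.1 (b a.1 a.2).2⟩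

theorem inverse_add_smul_mul_apply {L : E →L[ℝ] E} (hpos : ∀ x, 0 ≤ ⟪L x, x⟫) {lam : ℝ}
    (hlam : 0 < lam) {x : E} {s : ℝ} (hs : 0 ≤ s) (hx : L x = s • x) :
    (Ring.inverse (L + lam • (1 : E →L[ℝ] E)) * L) x = (s / (s + lam)) • x := by
  set T := L + lam • (1 : E →L[ℝ] E)
  have hunit : IsUnit T := by
    refine ContinuousLinearMap.isUnit_of_forall_le_norm_inner_map T (c := ⟨lam, hlam.le⟩) hlam
      fun y => le_trans ?_ (le_abs_self _)
    have hy := hpos y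
    simp only [T, _root_.add_apply, _root_.smul_apply, one_apply_eq_self,
      inner_add_left, real_inner_smul_left, real_inner_self_eq_norm_sq]
    change ‖y‖ ^ 2 * lam ≤ _
    linarith
  have hTx : T x = (s + lam) • x := by simp [T, hx, add_smul]
  have hinv : (s + lam) • Ring.inverse T x = x := by
    rw [← map_smul, ← hTx, ← mul_apply_eq_comp, Ring.inverse_mul_cancel _ hunit,
      one_apply_eq_self]
  have hne : s + lam ≠ 0 := by positivity
  rw [mul_apply_eq_comp, hx, map_smul, div_eq_mul_inv, mul_smul]
  conv_rhs => rw [← hinv, inv_smul_smul₀ hne]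

end Eigenbasis

section SingularSystem

variable {ι H E : Type*} [NormedAddCommGroup H] [InnerProductSpace ℝ H] [CompleteSpace H]
  [NormedAddCommGroup E] [InnerProductSpace ℝ E] [CompleteSpace E]
  {A : H →L[ℝ] E} {b : HilbertBasis ι ℝ E} {s : ι → ℝ}

/-- The right singular vectors of `A`, when `b` is an eigenbasis of `A A†` with eigenvalues `s`:
normalised images under `A†` of the eigenvectors with positive eigenvalue. -/
def rightSingularVec (A : H →L[ℝ] E) (b : HilbertBasis ι ℝ E) (s : ι → ℝ) (i : {i // 0 < s i}) :
    H :=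
  (√(s i))⁻¹ • A.adjoint (b i)

theorem sqrt_smul_rightSingularVec (i : {i // 0 < s i}) :
    √(s i) • rightSingularVec A b s i = A.adjoint (b i) :=
  smul_inv_smul₀ (Real.sqrt_pos.2 i.2).ne' _

variable (hb : ∀ i, A (A.adjoint (b i)) = s i • b i)
include hb

theorem norm_adjoint_eigenvector_sq (i : ι) : ‖A.adjoint (b i)‖ ^ 2 = s i := by
  rw [← real_inner_self_eq_norm_sq, ContinuousLinearMap.adjoint_inner_left, hb,
    real_inner_smul_right, real_inner_self_eq_norm_sq, b.orthonormal.1, one_pow, mul_one]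

theorem eigenvalue_nonneg (i : ι) : 0 ≤ s i :=
  norm_adjoint_eigenvector_sq hb i ▸ sq_nonneg _

theorem eigenvalue_eq_zero_of_not_pos {i : ι} (hi : ¬0 < s i) : s i = 0 :=
  le_antisymm (not_lt.1 hi) (eigenvalue_nonneg hb i)

theorem map_rightSingularVec (i : {i // 0 < s i}) :
    A (rightSingularVec A b s i) = √(s i) • b i := by
  rw [rightSingularVec, map_smul, hb, smul_smul, ← div_eq_inv_mul, Real.div_sqrt]

theorem orthonormal_rightSingularVec : Orthonormal ℝ (rightSingularVec A b s) := by
  have hinner (i j : {i // 0 < s i}) : ⟪rightSingularVec A b s i, rightSingularVec A b s j⟫ =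
      (√(s i))⁻¹ * (√(s j) * ⟪b i, b j⟫) := by
    rw [rightSingularVec, real_inner_smul_left, ContinuousLinearMap.adjoint_inner_left,
      map_rightSingularVec hb, real_inner_smul_right]
  refine ⟨fun i => ?_, fun i j hij => ?_⟩
  · rw [norm_eq_sqrt_real_inner, hinner, real_inner_self_eq_norm_sq, b.orthonormal.1, one_pow,
      mul_one, inv_mul_cancel₀ (Real.sqrt_pos.2 i.2).ne', Real.sqrt_one]
  · change ⟪_, _⟫ = 0
    rw [hinner, b.orthonormal.2 (Subtype.coe_injective.ne hij), mul_zero, mul_zero]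

theorem norm_map_rightSingularVec_sq (i : {i // 0 < s i}) :
    ‖A (rightSingularVec A b s i)‖ ^ 2 = s i := by
  rw [map_rightSingularVec hb, norm_smul, b.orthonormal.1, mul_one, Real.norm_eq_abs, sq_abs,
    Real.sq_sqrt i.2.le]

theorem map_eq_zero_of_forall_inner_rightSingularVec {x : H}
    (hx : ∀ i, ⟪rightSingularVec A b s i, x⟫ = 0) : A x = 0 := by
  refine b.repr.map_eq_zero_iff.1 (lp.ext (funext fun i => ?_))
  rw [b.repr_apply_apply, ← ContinuousLinearMap.adjoint_inner_left]
  by_cases hi : 0 < s i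
  · rw [← sqrt_smul_rightSingularVec ⟨i, hi⟩, real_inner_smul_left, hx, mul_zero]; rfl
  · have hzero : A.adjoint (b i) = 0 := by
      simpa [eigenvalue_eq_zero_of_not_pos hb hi] using norm_adjoint_eigenvector_sq hb i
    rw [hzero, inner_zero_left]; rfl

theorem eigenvalue_le (i : ι) : s i ≤ ‖A‖ ^ 2 := by
  rw [← norm_adjoint_eigenvector_sq hb]
  gcongr
  simpa [b.orthonormal.1 i] using A.adjoint.le_opNorm (b i)

theorem summable_rpow_smul_rightSingularVec {p : ℝ} (hp : 0 ≤ p) (g : E) :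
    Summable fun i : {i // 0 < s i} => (s i ^ p * ⟪b i, g⟫) • rightSingularVec A b s i := by
  refine ((orthonormal_rightSingularVec hb).orthogonalFamily.summable_iff_norm_sq_summable
    fun i => s i ^ p * ⟪b i, g⟫).2 ?_
  have hbessel := (b.orthonormal.comp (fun i : {i // 0 < s i} => (i : ι))
    Subtype.val_injective).inner_products_summable g
  refine .of_nonneg_of_le (fun _ => sq_nonneg _) (fun i : {i // 0 < s i} => ?_)
    (hbessel.mul_left (((‖A‖ ^ 2) ^ p) ^ 2))
  rw [norm_mul, mul_pow, Real.norm_of_nonneg (Real.rpow_nonneg i.2.le p)]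
  gcongr
  · exact Real.rpow_nonneg i.2.le p
  · exact i.2.le
  · exact eigenvalue_le hb i
  · rfl

theorem range_fracPower_subset {p : ℝ} (hp : 1 / 2 ≤ p) {P : E →L[ℝ] E}
    (hP : IsFracPower (A ∘L A.adjoint) p P) : Set.range P ⊆ Set.range A := by
  rintro _ ⟨g, rfl⟩
  have hsum := summable_rpow_smul_rightSingularVec hb (sub_nonneg.2 hp) g
  have hterm (i : {i // 0 < s i}) :
      A ((s i ^ (p - 1 / 2) * ⟪b i, g⟫) • rightSingularVec A b s i) =
        (s i ^ p * ⟪b i, g⟫) • b i := by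
    rw [map_smul, map_rightSingularVec hb, smul_smul, Real.sqrt_eq_rpow, mul_right_comm,
      ← Real.rpow_add i.2, sub_add_cancel]
  have hPg : HasSum (fun i => (s i ^ p * ⟪b i, g⟫) • b i) (P g) := by
    refine ((b.hasSum_repr g).mapL P).congr_fun fun i => ?_
    rw [map_smul, b.repr_apply_apply, hP.2 _ _ (hb i), smul_smul, mul_comm]
  refine ⟨_, HasSum.unique (hsum.hasSum.mapL A) ?_⟩
  simp only [hterm]
  refine (Subtype.val_injective.hasSum_iff fun i hi => ?_).2 hPg
  have hzero : s i = 0 := eigenvalue_eq_zero_of_not_pos hb fun hpos => hi ⟨⟨i, hpos⟩, rfl⟩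
  rw [hzero, Real.zero_rpow (by linarith), zero_mul, zero_smul]

theorem tsum_inner_inverse_add_smul_mul {lam : ℝ} (hlam : 0 < lam) :
    ∑' i, ⟪(Ring.inverse (A ∘L A.adjoint + lam • 1) * (A ∘L A.adjoint)) (b i), b i⟫ =
      ∑' i : {i // 0 < s i}, s i / (s i + lam) := by
  have hpos (x : E) : 0 ≤ ⟪(A ∘L A.adjoint) x, x⟫ := by
    rw [ContinuousLinearMap.comp_apply, ← ContinuousLinearMap.adjoint_inner_right]
    exact real_inner_self_nonneg
  have hdiag (i : ι) : ⟪(Ring.inverse (A ∘L A.adjoint + lam • 1) * (A ∘L A.adjoint)) (b i), b i⟫ =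
      s i / (s i + lam) := by
    rw [inverse_add_smul_mul_apply hpos hlam (eigenvalue_nonneg hb i) (hb i),
      real_inner_smul_left, real_inner_self_eq_norm_sq, b.orthonormal.1 i, one_pow, mul_one]
  simp_rw [hdiag]
  refine (Subtype.val_injective.tsum_eq fun i hi => ?_).symm
  by_contra hs
  have hzero : s i = 0 := eigenvalue_eq_zero_of_not_pos hb fun hpos => hs ⟨⟨i, hpos⟩, rfl⟩
  exact hi (by simp only [hzero, zero_div])

end SingularSystem

/-! ### Feature maps of kernels -/

section FeatureMap

universe u

theorem PosDefKernel.sum_sum_nonneg {D : Type*} {k : D → D → ℝ} (hk : PosDefKernel k)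
    (s : Finset D) (c : D → ℝ) : 0 ≤ ∑ x ∈ s, ∑ y ∈ s, c x * c y * k x y := by
  have h := hk s.card (fun i => s.equivFin.symm i) (fun i => c (s.equivFin.symm i))
  rw [s.equivFin.symm.sum_comp fun x : s => ∑ j, c x * c (s.equivFin.symm j) *
    k x (s.equivFin.symm j)] at h
  simp_rw [fun x : s => s.equivFin.symm.sum_comp fun y : s => c x * c y * k x y] at h
  rwa [← Finset.sum_coe_sort, Finset.sum_congr rfl fun x _ => (Finset.sum_coe_sort s _).symm]

/-- A real kernel as an operator-valued matrix, the form in which Mathlib constructs the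
reproducing kernel Hilbert space. -/
def operatorKernel {D : Type*} (k : D → D → ℝ) : Matrix D D (ℝ →L[ℝ] ℝ) :=
  Matrix.of fun x y => k x y • 1

theorem PosDefKernel.posSemidef_operatorKernel {D : Type*} {k : D → D → ℝ} (hk : PosDefKernel k)
    (hsymm : ∀ z z', k z z' = k z' z) : (operatorKernel k).PosSemidef := by
  refine ((RKHS.posSemidef_tfae (K := operatorKernel k)).out 0 2).2 ?_
  refine ⟨?_, fun c => ?_⟩
  · ext x y
    simp [operatorKernel, hsymm x y, Matrix.conjTranspose_apply]
  · refine (hk.sum_sum_nonneg c.support c).trans_eq ?_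
    simp only [Finsupp.sum, operatorKernel, map_sum]
    refine Finset.sum_congr rfl fun x _ => Finset.sum_congr rfl fun y _ => ?_
    simp [hsymm x y]
    ring

theorem PosDefKernel.exists_featureMap {D : Type u} {k : D → D → ℝ} (hk : PosDefKernel k)
    (hsymm : ∀ z z', k z z' = k z' z) :
    ∃ (H : Type u) (_ : NormedAddCommGroup H) (_ : InnerProductSpace ℝ H) (_ : CompleteSpace H)
      (Φ : D → H), ∀ z z', ⟪Φ z, Φ z'⟫ = k z z' := by
  have : Fact (operatorKernel k).PosSemidef := ⟨hk.posSemidef_operatorKernel hsymm⟩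
  refine ⟨RKHS.OfKernel (operatorKernel k), inferInstance, inferInstance, inferInstance,
    fun z => RKHS.kerFun (RKHS.OfKernel (operatorKernel k)) z (1 : ℝ), fun z z' => ?_⟩
  rw [← RKHS.kernel_inner, RKHS.OfKernel.kernel_ofKernel]
  simp [operatorKernel, hsymm z z']

theorem continuous_of_continuous_inner {D H : Type*} [TopologicalSpace D] [NormedAddCommGroup H]
    [InnerProductSpace ℝ H] {Φ : D → H} (h : Continuous fun q : D × D => ⟪Φ q.1, Φ q.2⟫) :
    Continuous Φ := by
  refine continuous_iff_continuousAt.2 fun z₀ => tendsto_iff_norm_sub_tendsto_zero.2 ?_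
  have hnorm (z) : ‖Φ z - Φ z₀‖ = √(⟪Φ z, Φ z⟫ - 2 * ⟪Φ z, Φ z₀⟫ + ⟪Φ z₀, Φ z₀⟫) := by
    rw [real_inner_self_eq_norm_sq, real_inner_self_eq_norm_sq, ← norm_sub_sq_real,
      Real.sqrt_sq (norm_nonneg _)]
  have hcont : Continuous fun z => ‖Φ z - Φ z₀‖ := by
    simp_rw [hnorm]
    have hdiag : Continuous fun z => ⟪Φ z, Φ z⟫ := h.comp (continuous_id.prodMk continuous_id)
    have hfix : Continuous fun z => ⟪Φ z, Φ z₀⟫ := h.comp (continuous_id.prodMk continuous_const)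
    fun_prop
  simpa using hcont.tendsto z₀

theorem exists_boundedContinuous_featureMap {D : Type u} [TopologicalSpace D] {k : D → D → ℝ}
    (hbdd : BoundedKernel k) (hcont : Continuous fun q : D × D => k q.1 q.2)
    (hsymm : ∀ z z', k z z' = k z' z) (hpd : PosDefKernel k) :
    ∃ (H : Type u) (_ : NormedAddCommGroup H) (_ : InnerProductSpace ℝ H) (_ : CompleteSpace H)
      (Φ : BoundedContinuousFunction D H), ∀ z z', ⟪Φ z, Φ z'⟫ = k z z' := by
  obtain ⟨H, _, _, hcomplete, Φ, hΦ⟩ := hpd.exists_featureMap hsymm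
  obtain ⟨C, hC⟩ := hbdd
  have hΦcont : Continuous Φ := continuous_of_continuous_inner (by simpa only [hΦ] using hcont)
  have hΦbdd (z) : ‖Φ z‖ ≤ √C := by
    refine Real.le_sqrt_of_sq_le ?_
    rw [← real_inner_self_eq_norm_sq, hΦ]
    exact (le_abs_self _).trans (hC z z)
  exact ⟨H, _, _, hcomplete, .ofNormedAddCommGroup Φ hΦcont _ hΦbdd, hΦ⟩

end FeatureMap

section FeatureOperator

open BoundedContinuousFunction

universe u

variable {D H : Type*} [TopologicalSpace D] [MeasurableSpace D] [BorelSpace D]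
  [NormedAddCommGroup H] [InnerProductSpace ℝ H] {ν : Measure D} [IsFiniteMeasure ν]
  {Φ : D →ᵇ H}

/-- The bounded operator `x ↦ ⟪Φ ·, x⟫` from the feature space to `L²(ν)`; for the feature map of
a kernel it is the inclusion of the reproducing kernel Hilbert space. -/
def featureToLp (ν : Measure D) [IsFiniteMeasure ν] (Φ : D →ᵇ H) : H →L[ℝ] Lp ℝ 2 ν :=
  BoundedContinuousFunction.toLp 2 ν ℝ ∘L LinearMap.mkContinuous
    { toFun := fun x => (innerSL ℝ x).compLeftContinuousBounded D Φ
      map_add' := fun x y => by ext z; simp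
      map_smul' := fun a x => by ext z; simp }
    ‖Φ‖ fun x => (norm_le (by positivity)).2 fun z => by
      simpa [mul_comm] using (norm_inner_le_norm (𝕜 := ℝ) x (Φ z)).trans
        (mul_le_mul_of_nonneg_left (Φ.norm_coe_le_norm z) (norm_nonneg x))

theorem coeFn_featureToLp (x : H) : featureToLp ν Φ x =ᵐ[ν] fun z => ⟪Φ z, x⟫ := by
  filter_upwards [coeFn_toLp 2 ν ℝ ((innerSL ℝ x).compLeftContinuousBounded D Φ)] with z hz
  exact hz.trans (real_inner_comm _ _)

theorem integrable_inner_feature_sq (x : H) : Integrable (fun z => ⟪Φ z, x⟫ ^ 2) ν :=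
  ((memLp_congr_ae (coeFn_featureToLp x)).1 (Lp.memLp (featureToLp ν Φ x))).integrable_sq

theorem norm_featureToLp_sq (x : H) : ‖featureToLp ν Φ x‖ ^ 2 = ∫ z, ⟪Φ z, x⟫ ^ 2 ∂ν := by
  rw [← real_inner_self_eq_norm_sq, L2.inner_def]
  refine integral_congr_ae ?_
  filter_upwards [coeFn_featureToLp x] with z hz
  rw [hz, real_inner_self_eq_norm_sq, Real.norm_eq_abs, sq_abs]

theorem summable_norm_featureToLp_sq {κ : Type*} {v : κ → H} (hv : Orthonormal ℝ v) :
    Summable fun i => ‖featureToLp ν Φ (v i)‖ ^ 2 := by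
  refine summable_of_sum_le (c := ∫ _, ‖Φ‖ ^ 2 ∂ν) (fun i => sq_nonneg _) fun s => ?_
  simp_rw [norm_featureToLp_sq]
  rw [← integral_finsetSum _ fun i _ => integrable_inner_feature_sq (v i)]
  refine integral_mono (integrable_finsetSum _ fun i _ => integrable_inner_feature_sq (v i))
    (integrable_const _) fun z => ?_
  calc ∑ i ∈ s, ⟪Φ z, v i⟫ ^ 2 = ∑ i ∈ s, ‖⟪v i, Φ z⟫‖ ^ 2 := by
        simp [real_inner_comm (Φ z)]
    _ ≤ ‖Φ z‖ ^ 2 := hv.sum_inner_products_le (Φ z)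
    _ ≤ ‖Φ‖ ^ 2 := by gcongr; exact Φ.norm_coe_le_norm z

variable [CompleteSpace H]

theorem isCompactOperator_featureToLp : IsCompactOperator (featureToLp ν Φ) := by
  obtain ⟨w, b, -⟩ := exists_hilbertBasis ℝ H
  exact isCompactOperator_of_summable_norm_sq b _ (summable_norm_featureToLp_sq b.orthonormal)

theorem exists_eigenbasis_featureToLp {D : Type u} [TopologicalSpace D] [MeasurableSpace D]
    [BorelSpace D] (ν : Measure D) [IsFiniteMeasure ν] (Φ : D →ᵇ H) :
    ∃ (ι : Type u) (b : HilbertBasis ι ℝ (Lp ℝ 2 ν)) (s : ι → ℝ),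
      ∀ i, featureToLp ν Φ ((featureToLp ν Φ).adjoint (b i)) = s i • b i :=
  exists_eigenbasis (L := featureToLp ν Φ ∘L (featureToLp ν Φ).adjoint)
    ((isCompactOperator_featureToLp (ν := ν) (Φ := Φ)).comp_clm (featureToLp ν Φ).adjoint)
    (IsSelfAdjoint.isSymmetric (by simp [IsSelfAdjoint, ContinuousLinearMap.star_eq_adjoint]))

/-- `L` is the integral operator with kernel `k` on `L²(ν)`. -/
def IsIntegralOperator {D : Type*} [MeasurableSpace D] (ν : Measure D) (k : D → D → ℝ)
    (L : Lp ℝ 2 ν →L[ℝ] Lp ℝ 2 ν) : Prop :=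
  ∀ g : Lp ℝ 2 ν, L g =ᵐ[ν] fun z => ∫ z', k z z' * g z' ∂ν

theorem IsIntegralOperator.eq_featureToLp_comp_adjoint {k : D → D → ℝ}
    {L : Lp ℝ 2 ν →L[ℝ] Lp ℝ 2 ν} (hL : IsIntegralOperator ν k L)
    (hΦ : ∀ z z', ⟪Φ z, Φ z'⟫ = k z z') :
    L = featureToLp ν Φ ∘L (featureToLp ν Φ).adjoint := by
  ext1 g
  refine Lp.ext ?_
  filter_upwards [hL g, coeFn_featureToLp (ν := ν) (Φ := Φ) ((featureToLp ν Φ).adjoint g)]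
    with z hLg hA
  rw [hLg, ContinuousLinearMap.comp_apply, hA, ContinuousLinearMap.adjoint_inner_right,
    L2.inner_def]
  refine integral_congr_ae ?_
  filter_upwards [coeFn_featureToLp (Φ := Φ) (Φ z)] with z' hz'
  simp [hz', ← hΦ z z', real_inner_comm (Φ z), mul_comm]

end FeatureOperator

section Mercer

open BoundedContinuousFunction

theorem hasSum_inner_smul_of_mem_closure_span {κ H : Type*} [NormedAddCommGroup H]
    [InnerProductSpace ℝ H] [CompleteSpace H] {v : κ → H} (hv : Orthonormal ℝ v) {x : H}
    (hx : x ∈ (Submodule.span ℝ (Set.range v)).topologicalClosure) :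
    HasSum (fun k => ⟪x, v k⟫ • v k) x := by
  obtain ⟨w, b, hvw, hb⟩ := hv.toSubtypeRange.exists_hilbertBasis_extension
  have hinj : Function.Injective fun k => (⟨v k, hvw ⟨k, rfl⟩⟩ : w) := fun k l hkl =>
    hv.linearIndependent.injective (congrArg Subtype.val hkl)
  have horth (i : w) (hi : i ∉ Set.range fun k => (⟨v k, hvw ⟨k, rfl⟩⟩ : w)) : ⟪x, b i⟫ = 0 := by
    refine Submodule.mem_orthogonal_singleton_iff_inner_left.1
      (Submodule.topologicalClosure_minimal _ (Submodule.span_le.2 ?_)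
        (Submodule.isClosed_orthogonal _) hx)
    rintro _ ⟨k, rfl⟩
    refine Submodule.mem_orthogonal_singleton_iff_inner_left.2 ?_
    have h := b.orthonormal.2 (i := ⟨v k, hvw ⟨k, rfl⟩⟩) (j := i) fun hki => hi ⟨k, hki⟩
    rwa [hb] at h ⊢
  have hsum := (hinj.hasSum_iff fun i hi => by
    rw [HilbertBasis.repr_apply_apply, real_inner_comm, horth i hi, zero_smul]).2 (b.hasSum_repr x)
  simpa [Function.comp_def, HilbertBasis.repr_apply_apply, hb, real_inner_comm] using hsum

variable {D H : Type*} [TopologicalSpace D] [SecondCountableTopology D] [MeasurableSpace D]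
  [BorelSpace D] [NormedAddCommGroup H] [InnerProductSpace ℝ H] [CompleteSpace H] {ν : Measure D}
  [IsFiniteMeasure ν] {Φ : D →ᵇ H}

theorem ae_mem_of_forall_mem_orthogonal {V : Submodule ℝ H} [V.HasOrthogonalProjection]
    (hV : ∀ x ∈ Vᗮ, featureToLp ν Φ x = 0) : ∀ᵐ z ∂ν, Φ z ∈ V := by
  have hsep : TopologicalSpace.IsSeparable (Set.range fun z => Φ z - V.starProjection (Φ z)) :=
    TopologicalSpace.isSeparable_range (by fun_prop)
  have hzero : (fun z => Φ z - V.starProjection (Φ z)) =ᵐ[ν] 0 := by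
    refine ae_eq_zero_of_forall_dual_of_isSeparable ℝ hsep (fun c => ?_)
      (Eventually.of_forall fun z => ⟨z, rfl⟩)
    obtain ⟨x, rfl⟩ := (InnerProductSpace.toDual ℝ H).surjective c
    have hx := hV _ (V.sub_starProjection_mem_orthogonal x)
    filter_upwards [coeFn_featureToLp (ν := ν) (Φ := Φ) (x - V.starProjection x),
      Lp.coeFn_zero ℝ 2 ν] with z hz hz0
    rw [hx, hz0] at hz
    rw [InnerProductSpace.toDual_apply_apply, inner_sub_right,
      ← Submodule.inner_starProjection_left_eq_right, ← inner_sub_left, real_inner_comm]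
    exact hz.symm
  filter_upwards [hzero] with z hz
  rw [sub_eq_zero.1 hz]
  exact Submodule.starProjection_apply_mem _ _

theorem ae_hasSum_inner_smul {κ : Type*} {v : κ → H} (hv : Orthonormal ℝ v)
    (hker : ∀ x, (∀ k, ⟪v k, x⟫ = 0) → featureToLp ν Φ x = 0) :
    ∀ᵐ z ∂ν, HasSum (fun k => ⟪Φ z, v k⟫ • v k) (Φ z) := by
  have : CompleteSpace (Submodule.span ℝ (Set.range v)).topologicalClosure :=
    (Submodule.isClosed_topologicalClosure _).completeSpace_coe
  filter_upwards [ae_mem_of_forall_mem_orthogonal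
    (V := (Submodule.span ℝ (Set.range v)).topologicalClosure) fun x hx => hker x fun k =>
      (Submodule.mem_orthogonal _ _).1 hx _
        (Submodule.le_topologicalClosure _ (Submodule.subset_span ⟨k, rfl⟩))] with z hz
  exact hasSum_inner_smul_of_mem_closure_span hv hz

end Mercer

section SourceAndTrace

open BoundedContinuousFunction

variable {D H : Type*} [TopologicalSpace D] [MeasurableSpace D] [BorelSpace D]
  [NormedAddCommGroup H] [InnerProductSpace ℝ H] [CompleteSpace H] {ν : Measure D}
  [IsFiniteMeasure ν] {Φ : D →ᵇ H}

theorem exists_featureToLp_eq_of_mem_range {p : ℝ} (hp : 1 / 2 ≤ p)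
    {P : Lp ℝ 2 ν →L[ℝ] Lp ℝ 2 ν}
    (hP : IsFracPower (featureToLp ν Φ ∘L (featureToLp ν Φ).adjoint) p P) {f : D → ℝ}
    (hf : MemLp f 2 ν) (hfP : hf.toLp f ∈ Set.range P) : ∃ u : H, f =ᵐ[ν] fun z => ⟪Φ z, u⟫ := by
  obtain ⟨ι, b, s, hb⟩ := exists_eigenbasis_featureToLp ν Φ
  obtain ⟨u, hu⟩ := range_fracPower_subset hb hp hP hfP
  exact ⟨u, hf.coeFn_toLp.symm.trans (hu ▸ coeFn_featureToLp u)⟩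

theorem summable_pos_eigenvalue {κ : Type*} {b : HilbertBasis κ ℝ (Lp ℝ 2 ν)} {s : κ → ℝ}
    (hb : ∀ i, featureToLp ν Φ ((featureToLp ν Φ).adjoint (b i)) = s i • b i) :
    Summable fun i : {i // 0 < s i} => s i := by
  simpa only [norm_map_rightSingularVec_sq hb] using
    summable_norm_featureToLp_sq (ν := ν) (Φ := Φ) (orthonormal_rightSingularVec hb)

theorem integral_trace_ridgeHat_le_of_traceAssumption {D : Type} [TopologicalSpace D]
    [SecondCountableTopology D] [MeasurableSpace D] [BorelSpace D] {ν : Measure D}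
    [IsFiniteMeasure ν] {Φ : D →ᵇ H} {Q γ : ℝ}
    (htrace : TraceAssumption ν (featureToLp ν Φ ∘L (featureToLp ν Φ).adjoint) Q γ)
    {ι Ω : Type*} [Fintype ι] [DecidableEq ι] [Nonempty ι] {mΩ : MeasurableSpace Ω}
    {μ : Measure Ω} [IsProbabilityMeasure μ] {zs : ι → Ω → D}
    (hzs : ∀ i, MeasurePreserving (zs i) μ ν) {lam : ℝ} (hlam : 0 < lam) :
    ∫ ω, (ridgeHat (fun i => Φ (zs i ω)) (Fintype.card ι * lam)).trace ∂μ ≤ Q * lam ^ (-γ) := by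
  obtain ⟨κ, b, s, hb⟩ := exists_eigenbasis_featureToLp ν Φ
  set v := rightSingularVec (featureToLp ν Φ) b s
  have hv : Orthonormal ℝ v := orthonormal_rightSingularVec hb
  have hs (k : {k // 0 < s k}) : ∫ z, ⟪Φ z, v k⟫ ^ 2 ∂ν = s k := by
    rw [← norm_featureToLp_sq, norm_map_rightSingularVec_sq hb]
  have hsum := summable_pos_eigenvalue hb
  have hcount : Countable {k // 0 < s k} := by
    rw [← Set.countable_univ_iff]
    exact hsum.countable_support.mono fun k _ => k.2.ne'
  have heff : Summable fun k : {k // 0 < s k} => s k / (s k + lam) := by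
    refine .of_nonneg_of_le (fun k => div_nonneg k.2.le (add_pos k.2 hlam).le) (fun k => ?_)
      (hsum.div_const lam)
    have hk := k.2
    gcongr
    linarith
  have hbound := integral_trace_ridgeHat_le Φ.continuous hzs hlam (fun k => (hv.1 k).le)
    (fun k => integrable_inner_feature_sq (v k))
    (ae_hasSum_inner_smul hv fun x => map_eq_zero_of_forall_inner_rightSingularVec hb)
    (by simpa only [hs] using heff)
  simp only [hs] at hbound
  exact (hbound.trans_eq (tsum_inner_inverse_add_smul_mul hb hlam).symm).trans (htrace lam hlam κ b)

end SourceAndTrace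

/-! ### Convergence in probability -/

section InProbability

open scoped ENNReal

variable {Ω : Type*} {mΩ : MeasurableSpace Ω} {μ : Measure Ω}

/-- Boundedness in probability (tightness) of a sequence of real random variables. -/
def IsBoundedInProb (μ : Measure Ω) (V : ℕ → Ω → ℝ) : Prop :=
  ∀ η : ℝ≥0∞, 0 < η → ∃ K : ℝ, ∀ᶠ n in atTop, μ {ω | K < |V n ω|} ≤ η

variable {U V : ℕ → Ω → ℝ}

theorem tendstoInMeasure_zero_of_sq_le (hV : TendstoInMeasure μ V atTop fun _ => 0)
    (hUV : ∀ᶠ n in atTop, ∀ ω, U n ω ^ 2 ≤ V n ω) : TendstoInMeasure μ U atTop fun _ => 0 := by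
  rw [tendstoInMeasure_iff_norm] at hV ⊢
  refine fun ε hε => tendsto_of_tendsto_of_tendsto_of_le_of_le' tendsto_const_nhds
    (hV (ε ^ 2) (by positivity)) (.of_forall fun _ => zero_le) ?_
  filter_upwards [hUV] with n hn
  refine measure_mono fun ω hω => ?_
  simp only [sub_zero, Real.norm_eq_abs, Set.mem_ofPred_eq] at hω ⊢
  calc ε ^ 2 ≤ |U n ω| ^ 2 := by gcongr
    _ = U n ω ^ 2 := sq_abs _
    _ ≤ |V n ω| := (hn ω).trans (le_abs_self _)

theorem tendstoInMeasure_zero_of_abs_le (hV : TendstoInMeasure μ V atTop fun _ => 0)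
    (hUV : ∀ᶠ n in atTop, ∀ ω, |U n ω| ≤ |V n ω|) : TendstoInMeasure μ U atTop fun _ => 0 := by
  rw [tendstoInMeasure_iff_norm] at hV ⊢
  refine fun ε hε => tendsto_of_tendsto_of_tendsto_of_le_of_le' tendsto_const_nhds
    (hV ε hε) (.of_forall fun _ => zero_le) ?_
  filter_upwards [hUV] with n hn
  refine measure_mono fun ω hω => ?_
  simp only [sub_zero, Real.norm_eq_abs, Set.mem_ofPred_eq] at hω ⊢
  exact hω.trans (hn ω)

theorem tendstoInMeasure_add {a b : Ω → ℝ} (hU : TendstoInMeasure μ U atTop a)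
    (hV : TendstoInMeasure μ V atTop b) :
    TendstoInMeasure μ (fun n ω => U n ω + V n ω) atTop fun ω => a ω + b ω := by
  rw [tendstoInMeasure_iff_norm] at hU hV ⊢
  intro ε hε
  have hsum := (hU (ε / 2) (half_pos hε)).add (hV (ε / 2) (half_pos hε))
  rw [add_zero] at hsum
  refine tendsto_of_tendsto_of_tendsto_of_le_of_le tendsto_const_nhds hsum (fun _ => zero_le)
    fun n => (measure_mono fun ω hω => ?_).trans (measure_union_le _ _)
  by_contra hω'
  simp only [Set.mem_union, Set.mem_ofPred_eq, not_or, not_le] at hω hω'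
  rw [add_sub_add_comm] at hω
  linarith [norm_add_le (U n ω - a ω) (V n ω - b ω)]

theorem IsBoundedInProb.const_add_const_mul (hV : IsBoundedInProb μ V) (a b : ℝ) :
    IsBoundedInProb μ fun n ω => a + b * V n ω := by
  intro η hη
  obtain ⟨K, hK⟩ := hV η hη
  refine ⟨|a| + |b| * K, hK.mono fun n hn => (measure_mono fun ω hω => ?_).trans hn⟩
  by_contra hω'
  simp only [Set.mem_ofPred_eq, not_lt] at hω hω'
  refine hω.not_ge ((abs_add_le _ _).trans ?_)
  rw [abs_mul]
  gcongr

theorem IsBoundedInProb.mul (hU : IsBoundedInProb μ U) (hV : IsBoundedInProb μ V) :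
    IsBoundedInProb μ fun n ω => U n ω * V n ω := by
  intro η hη
  obtain ⟨K, hK⟩ := hU (η / 2) (ENNReal.half_pos hη.ne')
  obtain ⟨M, hM⟩ := hV (η / 2) (ENNReal.half_pos hη.ne')
  refine ⟨max K 0 * M, ?_⟩
  filter_upwards [hK, hM] with n hKn hMn
  refine ((measure_mono fun ω hω => ?_).trans (measure_union_le _ _)).trans
    ((add_le_add hKn hMn).trans_eq (ENNReal.add_halves η))
  by_contra hω'
  simp only [Set.mem_union, Set.mem_ofPred_eq, not_or, not_lt, abs_mul] at hω hω'
  exact hω.not_ge (mul_le_mul (hω'.1.trans (le_max_left _ _)) hω'.2 (abs_nonneg _)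
    (le_max_right _ _))

theorem IsBoundedInProb.mul_tendstoInMeasure_zero (hV : IsBoundedInProb μ V)
    (hU : TendstoInMeasure μ U atTop fun _ => 0) :
    TendstoInMeasure μ (fun n ω => V n ω * U n ω) atTop fun _ => 0 := by
  rw [tendstoInMeasure_iff_norm] at hU ⊢
  intro ε hε
  refine ENNReal.tendsto_nhds_zero.2 fun η hη => ?_
  obtain ⟨K, hK⟩ := hV (η / 2) (ENNReal.half_pos hη.ne')
  have hK0 : 0 < max K 1 := lt_max_of_lt_right one_pos
  filter_upwards [hK, ENNReal.tendsto_nhds_zero.1 (hU (ε / max K 1) (by positivity)) (η / 2)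
    (ENNReal.half_pos hη.ne')] with n hVn hUn
  refine ((measure_mono fun ω hω => ?_).trans (measure_union_le _ _)).trans
    ((add_le_add hVn hUn).trans_eq (ENNReal.add_halves η))
  by_contra hω'
  simp only [Set.mem_union, Set.mem_ofPred_eq, not_or, not_lt, not_le, sub_zero, Real.norm_eq_abs,
    abs_mul] at hω hω'
  refine hω.not_gt ?_
  calc |V n ω| * |U n ω| ≤ max K 1 * |U n ω| := by
        gcongr
        exact hω'.1.trans (le_max_left _ _)
    _ < ε := (lt_div_iff₀' hK0).1 hω'.2

variable [IsFiniteMeasure μ]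

theorem measure_ge_le_integral_div {f : Ω → ℝ} (hf : 0 ≤ f) (hint : Integrable f μ) {K : ℝ}
    (hK : 0 < K) : μ {ω | K ≤ f ω} ≤ ENNReal.ofReal ((∫ ω, f ω ∂μ) / K) := by
  rw [← ofReal_measureReal]
  exact ENNReal.ofReal_le_ofReal ((le_div_iff₀' hK).2
    (mul_meas_ge_le_integral_of_nonneg (.of_forall hf) hint K))

theorem isBoundedInProb_of_integral_le {C : ℝ} (hV : ∀ᶠ n in atTop, 0 ≤ V n)
    (hint : ∀ᶠ n in atTop, Integrable (V n) μ) (hC : ∀ᶠ n in atTop, ∫ ω, V n ω ∂μ ≤ C) :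
    IsBoundedInProb μ V := by
  intro η hη
  have hlim : Tendsto (fun K : ℝ => ENNReal.ofReal (C / K)) atTop (𝓝 0) := by
    simpa using ENNReal.tendsto_ofReal (tendsto_id.const_div_atTop C)
  obtain ⟨K, hKη, hK⟩ :=
    ((ENNReal.tendsto_nhds_zero.1 hlim η hη).and (eventually_gt_atTop 0)).exists
  refine ⟨K, ?_⟩
  filter_upwards [hV, hint, hC] with n hVn hintn hCn
  refine le_trans ?_ hKη
  calc μ {ω | K < |V n ω|} ≤ μ {ω | K ≤ V n ω} :=
        measure_mono fun ω (hω : K < |V n ω|) => (abs_of_nonneg (hVn ω) ▸ hω).le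
    _ ≤ ENNReal.ofReal ((∫ ω, V n ω ∂μ) / K) := measure_ge_le_integral_div hVn hintn hK
    _ ≤ ENNReal.ofReal (C / K) := by gcongr

theorem tendstoInMeasure_zero_of_integral_le {c : ℕ → ℝ} (hV : ∀ n, 0 ≤ V n)
    (hint : ∀ n, Integrable (V n) μ) (hle : ∀ᶠ n in atTop, ∫ ω, V n ω ∂μ ≤ c n)
    (hc : Tendsto c atTop (𝓝 0)) : TendstoInMeasure μ V atTop fun _ => 0 := by
  rw [tendstoInMeasure_iff_norm]
  intro ε hε
  have hlim : Tendsto (fun n => ENNReal.ofReal (c n / ε)) atTop (𝓝 0) := by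
    simpa using ENNReal.tendsto_ofReal (hc.div_const ε)
  refine tendsto_of_tendsto_of_tendsto_of_le_of_le' tendsto_const_nhds hlim
    (.of_forall fun _ => zero_le) ?_
  filter_upwards [hle] with n hn
  have habs (ω : Ω) : ‖V n ω - 0‖ = V n ω := by rw [sub_zero, Real.norm_of_nonneg (hV n ω)]
  simp only [habs]
  refine (measure_ge_le_integral_div (hV n) (hint n) hε).trans (ENNReal.ofReal_le_ofReal ?_)
  gcongr

end InProbability

section MeanClose

variable {Ω : Type*} {mΩ : MeasurableSpace Ω} {μ : Measure Ω}

/-- The first `n` entries of the `n`-th row of the array `x` approximate those of the sequence `y`: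
they are dominated by random variables that are bounded in probability, and their mean absolute
difference tends to zero in probability. -/
structure MeanClose (μ : Measure Ω) (x : ℕ → ℕ → Ω → ℝ) (y : ℕ → Ω → ℝ) : Prop where
  exists_bound : ∃ B : ℕ → Ω → ℝ, IsBoundedInProb μ B ∧
    ∀ᶠ n in atTop, ∀ ω, ∀ i < n, |x n i ω| ≤ B n ω ∧ |y i ω| ≤ B n ω
  mean_abs_sub : TendstoInMeasure μ
    (fun (n : ℕ) ω => (n : ℝ)⁻¹ * ∑ i ∈ Finset.range n, |x n i ω - y i ω|) atTop fun _ => 0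

variable {x x' : ℕ → ℕ → Ω → ℝ} {y y' : ℕ → Ω → ℝ}

theorem abs_mul_sub_mul_le {a a' b b' B B' : ℝ} (ha : |a| ≤ B) (hb' : |b'| ≤ B') :
    |a * a' - b * b'| ≤ B * |a' - b'| + B' * |a - b| := by
  calc |a * a' - b * b'| = |a * (a' - b') + b' * (a - b)| := by ring_nf
    _ ≤ |a| * |a' - b'| + |b'| * |a - b| := (abs_add_le _ _).trans_eq (by rw [abs_mul, abs_mul])
    _ ≤ B * |a' - b'| + B' * |a - b| := by gcongr

theorem MeanClose.mul (h : MeanClose μ x y) (h' : MeanClose μ x' y') :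
    MeanClose μ (fun n i ω => x n i ω * x' n i ω) fun i ω => y i ω * y' i ω := by
  obtain ⟨B, hB, hxy⟩ := h.exists_bound
  obtain ⟨B', hB', hxy'⟩ := h'.exists_bound
  refine ⟨⟨fun n ω => B n ω * B' n ω, hB.mul hB', ?_⟩, ?_⟩
  · filter_upwards [hxy, hxy'] with n hn hn' ω i hi
    have hB0 : 0 ≤ B n ω := (abs_nonneg _).trans (hn ω i hi).1
    rw [abs_mul, abs_mul]
    exact ⟨mul_le_mul (hn ω i hi).1 (hn' ω i hi).1 (abs_nonneg _) hB0,
      mul_le_mul (hn ω i hi).2 (hn' ω i hi).2 (abs_nonneg _) hB0⟩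
  · have hlim := tendstoInMeasure_add (hB.mul_tendstoInMeasure_zero h'.mean_abs_sub)
      (hB'.mul_tendstoInMeasure_zero h.mean_abs_sub)
    simp only [add_zero] at hlim
    refine tendstoInMeasure_zero_of_abs_le hlim ?_
    filter_upwards [hxy, hxy'] with n hn hn' ω
    rw [abs_of_nonneg (by positivity)]
    refine le_trans ?_ (le_abs_self _)
    calc (n : ℝ)⁻¹ * ∑ i ∈ Finset.range n, |x n i ω * x' n i ω - y i ω * y' i ω|
        ≤ (n : ℝ)⁻¹ * ∑ i ∈ Finset.range n,
            (B n ω * |x' n i ω - y' i ω| + B' n ω * |x n i ω - y i ω|) := by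
          gcongr with i hi
          have hi' := Finset.mem_range.1 hi
          exact abs_mul_sub_mul_le (hn ω i hi').1 (hn' ω i hi').2
      _ = B n ω * ((n : ℝ)⁻¹ * ∑ i ∈ Finset.range n, |x' n i ω - y' i ω|) +
            B' n ω * ((n : ℝ)⁻¹ * ∑ i ∈ Finset.range n, |x n i ω - y i ω|) := by
          rw [Finset.sum_add_distrib, ← Finset.mul_sum, ← Finset.mul_sum]
          ring

theorem MeanClose.tendstoInMeasure_mean (h : MeanClose μ x y) {m : Ω → ℝ}
    (hy : TendstoInMeasure μ (fun (n : ℕ) ω => (n : ℝ)⁻¹ * ∑ i ∈ Finset.range n, y i ω) atTop m) :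
    TendstoInMeasure μ (fun (n : ℕ) ω => (n : ℝ)⁻¹ * ∑ i ∈ Finset.range n, x n i ω) atTop m := by
  have hdiff : TendstoInMeasure μ
      (fun (n : ℕ) ω => (n : ℝ)⁻¹ * ∑ i ∈ Finset.range n, (x n i ω - y i ω)) atTop fun _ => 0 := by
    refine tendstoInMeasure_zero_of_abs_le h.mean_abs_sub (.of_forall fun n ω => ?_)
    rw [abs_mul, abs_mul]
    exact mul_le_mul_of_nonneg_left ((Finset.abs_sum_le_sum_abs _ _).trans (le_abs_self _))
      (abs_nonneg _)
  simpa [← mul_add, ← Finset.sum_add_distrib] using tendstoInMeasure_add hdiff hy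

end MeanClose

theorem tendstoInMeasure_mean_of_iIndepFun {Ω W : Type*} {mΩ : MeasurableSpace Ω}
    {mW : MeasurableSpace W} {μ : Measure Ω} [IsFiniteMeasure μ] {P : Measure W} {S : ℕ → Ω → W}
    (hS : ∀ i, MeasurePreserving (S i) μ P) (hind : iIndepFun S μ) {g : W → ℝ}
    (hg : Measurable g) (hint : Integrable g P) :
    TendstoInMeasure μ (fun (n : ℕ) ω => (n : ℝ)⁻¹ * ∑ i ∈ Finset.range n, g (S i ω)) atTop
      fun _ => ∫ w, g w ∂P := by
  have hmean : ∫ ω, g (S 0 ω) ∂μ = ∫ w, g w ∂P :=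
    (hS 0).map_eq ▸ (integral_map (hS 0).aemeasurable hg.aestronglyMeasurable).symm
  have hlaw (i : ℕ) : IdentDistrib (S i) (S 0) μ μ :=
    ⟨(hS i).aemeasurable, (hS 0).aemeasurable, (hS i).map_eq.trans (hS 0).map_eq.symm⟩
  have hslln := strong_law_ae_real (fun i ω => g (S i ω))
    ((hS 0).integrable_comp_of_integrable hint) (fun i j hij => (hind.indepFun hij).comp hg hg)
    fun i => (hlaw i).comp hg
  have hmeas (n : ℕ) : Measurable fun ω => (n : ℝ)⁻¹ * ∑ i ∈ Finset.range n, g (S i ω) :=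
    (Finset.measurable_fun_sum _ fun i _ => hg.comp (hS i).measurable).const_mul _
  refine tendstoInMeasure_of_tendsto_ae (fun n => (hmeas n).aestronglyMeasurable) ?_
  filter_upwards [hslln] with ω hω
  rw [hmean] at hω
  simpa only [div_eq_inv_mul] using hω

/-! ### Consistency of regularized least squares -/

section PathwiseError

open scoped Matrix TensorProduct

variable {ι H : Type*} [Fintype ι] [DecidableEq ι] [NormedAddCommGroup H] [InnerProductSpace ℝ H]

/-- Bias plus noise bound on the error of ridge regression with regression function `⟪·, u⟫`,
noise `ε` and penalty `c`. -/
def ridgeErrorBound (Φ : ι → H) (c : ℝ) (u : H) (ε : ι → ℝ) : ℝ :=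
  ‖u‖ ^ 2 + c⁻¹ * (ε ⬝ᵥ ridgeHat Φ c *ᵥ ε)

variable {c : ℝ}

theorem ridgeErrorBound_nonneg (Φ : ι → H) (hc : 0 < c) (u : H) (ε : ι → ℝ) :
    0 ≤ ridgeErrorBound Φ c u ε := by
  have := dotProduct_ridgeHat_nonneg Φ hc ε
  rw [ridgeErrorBound]
  positivity

theorem ridge_error_le_mul_ridgeErrorBound (Φ : ι → H) (hc : 0 < c) (u : H) (ε : ι → ℝ) :
    c * ‖ridge Φ c (fun i => ⟪Φ i, u⟫ + ε i) - u‖ ^ 2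
        + ∑ i, ⟪Φ i, ridge Φ c (fun i => ⟪Φ i, u⟫ + ε i) - u⟫ ^ 2
      ≤ c * (2 * ridgeErrorBound Φ c u ε) := by
  refine (ridge_error Φ hc u ε).trans_eq ?_
  rw [ridgeErrorBound]
  field_simp

theorem norm_ridge_sub_sq_le (Φ : ι → H) (hc : 0 < c) (u : H) (ε : ι → ℝ) :
    ‖ridge Φ c (fun i => ⟪Φ i, u⟫ + ε i) - u‖ ^ 2 ≤ 2 * ridgeErrorBound Φ c u ε :=
  le_of_mul_le_mul_left ((le_add_of_nonneg_right (Finset.sum_nonneg fun _ _ => sq_nonneg _)).trans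
    (ridge_error_le_mul_ridgeErrorBound Φ hc u ε)) hc

theorem sum_inner_ridge_sub_sq_le (Φ : ι → H) (hc : 0 < c) (u : H) (ε : ι → ℝ) :
    ∑ i, ⟪Φ i, ridge Φ c (fun i => ⟪Φ i, u⟫ + ε i) - u⟫ ^ 2 ≤ c * (2 * ridgeErrorBound Φ c u ε) :=
  (le_add_of_nonneg_left (by positivity)).trans (ridge_error_le_mul_ridgeErrorBound Φ hc u ε)

theorem mean_inner_ridge_sub_sq_le {n r : ℕ} (hr : 0 < r) (hrn : r ≤ n) (Φ : ℕ → H) {lam : ℝ}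
    (hlam : 0 < lam) (u : H) (ε : Fin r → ℝ) :
    (n : ℝ)⁻¹ * ∑ i ∈ Finset.range n,
        ⟪Φ i, ridge (fun i : Fin r => Φ i) (r * lam) (fun i => ⟪Φ i, u⟫ + ε i) - u⟫ ^ 2 ≤
      2 * ridgeErrorBound (fun i : Fin r => Φ i) (r * lam) u ε *
        (lam + ‖∑ i ∈ Finset.range n, splitWeight n r i • (Φ i ⊗ₜ[ℝ] Φ i)‖) := by
  have hr' : (0 : ℝ) < r := by exact_mod_cast hr
  set d := ridge (fun i : Fin r => Φ i) (r * lam) (fun i => ⟪Φ i, u⟫ + ε i) - u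
  set V := ridgeErrorBound (fun i : Fin r => Φ i) (r * lam) u ε
  set T := ∑ i ∈ Finset.range n, splitWeight n r i • (Φ i ⊗ₜ[ℝ] Φ i)
  have hnorm : ‖d‖ ^ 2 ≤ 2 * V := norm_ridge_sub_sq_le _ (mul_pos hr' hlam) u ε
  have hfit : ∑ i ∈ Finset.range r, ⟪Φ i, d⟫ ^ 2 ≤ r * lam * (2 * V) := by
    rw [← Fin.sum_univ_eq_sum_range fun i => ⟪Φ i, d⟫ ^ 2]
    exact sum_inner_ridge_sub_sq_le _ (mul_pos hr' hlam) u ε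
  calc (n : ℝ)⁻¹ * ∑ i ∈ Finset.range n, ⟪Φ i, d⟫ ^ 2
      ≤ (r : ℝ)⁻¹ * ∑ i ∈ Finset.range r, ⟪Φ i, d⟫ ^ 2 + ‖T‖ * ‖d‖ ^ 2 := mean_inner_sq_le hrn Φ d
    _ ≤ (r : ℝ)⁻¹ * (r * lam * (2 * V)) + ‖T‖ * (2 * V) := by gcongr
    _ = 2 * V * (lam + ‖T‖) := by field_simp

theorem mean_abs_sq_le_mean_sq (n : ℕ) (a : ℕ → ℝ) :
    ((n : ℝ)⁻¹ * ∑ i ∈ Finset.range n, |a i|) ^ 2 ≤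
      (n : ℝ)⁻¹ * ∑ i ∈ Finset.range n, a i ^ 2 := by
  rcases n.eq_zero_or_pos with rfl | hn
  · simp
  have hcs := sq_sum_le_card_mul_sum_sq (s := Finset.range n) (f := fun i => |a i|)
  simp only [sq_abs, Finset.card_range] at hcs
  rw [mul_pow, sq, mul_assoc]
  gcongr
  exact (inv_mul_le_iff₀ (by positivity)).2 hcs

theorem rls_eq_inner_ridge {D : Type*} {k : D → D → ℝ} {Φ : D → H}
    (hΦ : ∀ z z', ⟪Φ z, Φ z'⟫ = k z z') (zs : ℕ → D) (y : ℕ → ℝ) (r : ℕ) (lam : ℝ) (z : D) :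
    rls k zs y r lam z =
      ⟪Φ z, ridge (fun i : Fin r => Φ (zs i)) (r * lam) fun i => y i⟫ := by
  have hgram : Matrix.gram ℝ (fun i : Fin r => Φ (zs i)) =
      Matrix.of fun i l : Fin r => k (zs i) (zs l) := by
    ext i l
    simp [Matrix.gram_apply, hΦ]
  rw [real_inner_comm, ridge, sum_inner]
  simp only [rls, ridgeCoef, hgram, real_inner_smul_left, hΦ]

end PathwiseError

/-- The penalty `λ_r = r ^ (-1 / (1 + γ))` used with `r` samples. -/
def ridgeParam (γ : ℝ) (r : ℕ) : ℝ := (r : ℝ) ^ (-(1 / (1 + γ)))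

section RidgeParam

variable {γ : ℝ} {r : ℕ}

theorem ridgeParam_pos (hr : 0 < r) : 0 < ridgeParam γ r :=
  Real.rpow_pos_of_pos (by exact_mod_cast hr) _

theorem ridgeParam_rpow_neg (hγ : -1 < γ) (hr : 0 < r) :
    ridgeParam γ r ^ (-γ) = r * ridgeParam γ r := by
  have hr' : (0 : ℝ) < r := by exact_mod_cast hr
  have hγ' : 1 + γ ≠ 0 := by linarith
  rw [ridgeParam, ← Real.rpow_mul hr'.le, mul_comm (r : ℝ), ← Real.rpow_add_one hr'.ne']
  congr 1
  field_simp
  ring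

theorem tendsto_ridgeParam (hγ : -1 < γ) : Tendsto (ridgeParam γ) atTop (𝓝 0) :=
  (tendsto_rpow_neg_atTop (one_div_pos.2 (neg_lt_iff_pos_add'.1 hγ))).comp
    tendsto_natCast_atTop_atTop

end RidgeParam

section Sampling

open BoundedContinuousFunction
open scoped TensorProduct

variable {D : Type} {W Ω H : Type*} [TopologicalSpace D] [SecondCountableTopology D]
  [MeasurableSpace D] [BorelSpace D] [MeasurableSpace W] {mΩ : MeasurableSpace Ω}
  [NormedAddCommGroup H] [InnerProductSpace ℝ H] {Φ : D →ᵇ H} {rn : ℕ → ℕ}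
  {μ : Measure Ω} [IsProbabilityMeasure μ] {ν : Measure D}

theorem tendstoInMeasure_norm_splitWeight_second_moment (Φ : D →ᵇ H)
    {zs : ℕ → Ω → D} (hzs : ∀ i, MeasurePreserving (zs i) μ ν) (hind : iIndepFun zs μ)
    (hrn : ∀ n, rn n ≤ n) (hrt : Tendsto rn atTop atTop) :
    TendstoInMeasure μ (fun n ω => ‖∑ i ∈ Finset.range n, splitWeight n (rn n) i •
      (Φ (zs i ω) ⊗ₜ[ℝ] Φ (zs i ω))‖) atTop fun _ => 0 := by
  have hcont : Continuous fun z => Φ z ⊗ₜ[ℝ] Φ z :=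
    TensorProduct.continuous_tmul.comp (Φ.continuous.prodMk Φ.continuous)
  have hbdd (z : D) : ‖Φ z ⊗ₜ[ℝ] Φ z‖ ≤ ‖Φ‖ * ‖Φ‖ := by
    rw [TensorProduct.norm_tmul]
    gcongr <;> exact Φ.norm_coe_le_norm z
  have hlim : Tendsto (fun n => 2 * (‖Φ‖ * ‖Φ‖) ^ 2 * (rn n : ℝ)⁻¹) atTop (𝓝 0) := by
    have hinv : Tendsto (fun n => (rn n : ℝ)⁻¹) atTop (𝓝 0) :=
      tendsto_inv_atTop_nhds_zero_nat.comp hrt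
    simpa using hinv.const_mul (2 * (‖Φ‖ * ‖Φ‖) ^ 2)
  refine tendstoInMeasure_zero_of_sq_le (tendstoInMeasure_zero_of_integral_le
    (fun n ω => sq_nonneg _) (fun n => integrable_norm_sum_smul_sq hcont hbdd
      (fun i => (hzs i).measurable) _ _) ?_ hlim) (.of_forall fun n ω => le_rfl)
  filter_upwards [hrt.eventually_gt_atTop 0] with n hr
  refine (integral_norm_sum_smul_sq_le hcont hbdd hzs (fun i j hij => hind.indepFun hij)
    (sum_splitWeight hr (hrn n))).trans ?_
  gcongr
  exact sum_splitWeight_sq_le hr (hrn n)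

variable {P : Measure W} {S : ℕ → Ω → W} {π : W → D} {ξ : W → ℝ} {C Q γ : ℝ}
  (hS : ∀ i, MeasurePreserving (S i) μ P) (hind : iIndepFun S μ) (hπ : MeasurePreserving π P ν)
  (hξ : Measurable ξ) (hξC : ∀ w, |ξ w| ≤ C)

include hS hπ hξ hξC in
theorem integrable_ridgeErrorBound (u : H) {r : ℕ} {c : ℝ} (hc : 0 < c) :
    Integrable (fun ω => ridgeErrorBound (fun i : Fin r => Φ (π (S i ω))) c u
      fun i => ξ (S i ω)) μ :=
  (integrable_const _).add ((integrable_noise_energy (S := fun i : Fin r => S i) Φ.continuous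
    (fun i => (hS i).measurable) hπ.measurable hξ hξC hc).const_mul _)

variable [CompleteSpace H] [IsProbabilityMeasure ν] (hmean : CondMeanZero P π ξ)
  (htrace : TraceAssumption ν (featureToLp ν Φ ∘L (featureToLp ν Φ).adjoint) Q γ) (hγ : -1 < γ)
  (u : H)

include hS hind hπ hξ hξC hmean htrace hγ

/-- The penalty balances the noise: `E[ε ⬝ᵥ hat *ᵥ ε] ≤ C² Q λ ^ (-γ)`, and `λ ^ (-γ) = r λ`. -/
theorem integral_ridgeErrorBound_le {r : ℕ} (hr : 0 < r) :
    ∫ ω, ridgeErrorBound (fun i : Fin r => Φ (π (S i ω))) (r * ridgeParam γ r) u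
      (fun i => ξ (S i ω)) ∂μ ≤ ‖u‖ ^ 2 + C ^ 2 * Q := by
  have hlam : 0 < ridgeParam γ r := ridgeParam_pos hr
  have hc : 0 < r * ridgeParam γ r := mul_pos (by exact_mod_cast hr) hlam
  have : Nonempty (Fin r) := ⟨⟨0, hr⟩⟩
  have hnoise := hmean.integral_noise_energy_le (S := fun i : Fin r => S i) Φ.continuous
    (fun i => hS i) (hind.precomp Fin.val_injective) hπ.measurable hξ hξC hc
  have hdof := integral_trace_ridgeHat_le_of_traceAssumption (ι := Fin r) htrace
    (fun i => hπ.comp (hS i)) hlam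
  rw [Fintype.card_fin, ridgeParam_rpow_neg hγ hr] at hdof
  have hint := integrable_noise_energy (S := fun i : Fin r => S i) (μ := μ) Φ.continuous
    (fun i => (hS i).measurable) hπ.measurable hξ hξC hc
  simp only [ridgeErrorBound]
  rw [integral_add (integrable_const _) (hint.const_mul _), integral_const_mul, integral_const,
    probReal_univ, one_smul]
  refine add_le_add le_rfl ((inv_mul_le_iff₀ hc).2 (hnoise.trans ?_))
  calc _ ≤ C ^ 2 * (Q * (r * ridgeParam γ r)) := by gcongr; exact hdof
    _ = r * ridgeParam γ r * (C ^ 2 * Q) := by ring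

variable (hrt : Tendsto rn atTop atTop)
include hrt

theorem isBoundedInProb_ridgeErrorBound :
    IsBoundedInProb μ fun n ω => ridgeErrorBound (fun i : Fin (rn n) => Φ (π (S i ω)))
      (rn n * ridgeParam γ (rn n)) u fun i => ξ (S i ω) := by
  have hr : ∀ᶠ n in atTop, 0 < rn n := hrt.eventually_gt_atTop 0
  have hc {r : ℕ} (hr : 0 < r) : 0 < r * ridgeParam γ r :=
    mul_pos (by exact_mod_cast hr) (ridgeParam_pos hr)
  exact isBoundedInProb_of_integral_le
    (hr.mono fun n hr ω => ridgeErrorBound_nonneg _ (hc hr) _ _)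
    (hr.mono fun n hr => integrable_ridgeErrorBound hS hπ hξ hξC u (hc hr))
    (hr.mono fun n hr => integral_ridgeErrorBound_le hS hind hπ hξ hξC hmean htrace hγ u hr)

variable (hrn : ∀ n, rn n ≤ n)
include hrn

theorem tendstoInMeasure_mean_inner_ridge_sub_sq :
    TendstoInMeasure μ (fun (n : ℕ) ω => (n : ℝ)⁻¹ * ∑ i ∈ Finset.range n, ⟪Φ (π (S i ω)),
      ridge (fun i : Fin (rn n) => Φ (π (S i ω))) (rn n * ridgeParam γ (rn n))
        (fun i => ⟪Φ (π (S i ω)), u⟫ + ξ (S i ω)) - u⟫ ^ 2) atTop fun _ => 0 := by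
  have hsplit := tendstoInMeasure_norm_splitWeight_second_moment Φ (fun i => hπ.comp (hS i))
    (hind.comp (fun _ => π) fun _ => hπ.measurable) hrn hrt
  have hlam : TendstoInMeasure μ (fun n (_ : Ω) => ridgeParam γ (rn n)) atTop fun _ => 0 :=
    tendstoInMeasure_of_tendsto_ae (fun n => aestronglyMeasurable_const)
      (.of_forall fun _ => (tendsto_ridgeParam hγ).comp hrt)
  have hbound := (isBoundedInProb_ridgeErrorBound hS hind hπ hξ hξC hmean htrace hγ u
    hrt).const_add_const_mul 0 2
  have hprod := hbound.mul_tendstoInMeasure_zero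
    (by simpa only [add_zero] using tendstoInMeasure_add hlam hsplit)
  refine tendstoInMeasure_zero_of_abs_le hprod ?_
  filter_upwards [hrt.eventually_gt_atTop 0] with n hr ω
  rw [abs_of_nonneg (by positivity), zero_add]
  exact (mean_inner_ridge_sub_sq_le hr (hrn n) (fun i => Φ (π (S i ω))) (ridgeParam_pos hr) u
    _).trans (le_abs_self _)

theorem meanClose_ridge_residual :
    MeanClose μ (fun n i ω => ⟪Φ (π (S i ω)), u⟫ + ξ (S i ω) - ⟪Φ (π (S i ω)),
      ridge (fun i : Fin (rn n) => Φ (π (S i ω))) (rn n * ridgeParam γ (rn n))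
        fun i => ⟪Φ (π (S i ω)), u⟫ + ξ (S i ω)⟫) fun i ω => ξ (S i ω) := by
  set d : ℕ → Ω → H := fun n ω =>
    ridge (fun i : Fin (rn n) => Φ (π (S i ω))) (rn n * ridgeParam γ (rn n))
      (fun i => ⟪Φ (π (S i ω)), u⟫ + ξ (S i ω)) - u with hd
  set V : ℕ → Ω → ℝ := fun n ω => ridgeErrorBound (fun i : Fin (rn n) => Φ (π (S i ω)))
    (rn n * ridgeParam γ (rn n)) u fun i => ξ (S i ω)
  have hresidual (n i : ℕ) (ω : Ω) : ⟪Φ (π (S i ω)), u⟫ + ξ (S i ω) - ⟪Φ (π (S i ω)),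
      ridge (fun i : Fin (rn n) => Φ (π (S i ω))) (rn n * ridgeParam γ (rn n))
        fun i => ⟪Φ (π (S i ω)), u⟫ + ξ (S i ω)⟫ = ξ (S i ω) - ⟪Φ (π (S i ω)), d n ω⟫ := by
    rw [hd, inner_sub_right]
    ring
  simp only [hresidual]
  have hsq := tendstoInMeasure_mean_inner_ridge_sub_sq hS hind hπ hξ hξC hmean htrace hγ u hrt hrn
  refine ⟨⟨fun n ω => (C + ‖Φ‖) + 2 * ‖Φ‖ * V n ω, (isBoundedInProb_ridgeErrorBound hS hind hπ hξ
    hξC hmean htrace hγ u hrt).const_add_const_mul _ _, ?_⟩, tendstoInMeasure_zero_of_sq_le hsq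
      (.of_forall fun n ω => ?_)⟩
  · filter_upwards [hrt.eventually_gt_atTop 0] with n hr ω i _
    have hc : 0 < rn n * ridgeParam γ (rn n) :=
      mul_pos (by exact_mod_cast hr) (ridgeParam_pos hr)
    have hV : 0 ≤ V n ω := ridgeErrorBound_nonneg _ hc _ _
    have hnorm : ‖d n ω‖ ≤ 1 + 2 * V n ω := by
      have hle : ‖d n ω‖ ^ 2 ≤ 2 * V n ω := norm_ridge_sub_sq_le _ hc _ _
      nlinarith [sq_nonneg (‖d n ω‖ - 1)]
    have hinner : |⟪Φ (π (S i ω)), d n ω⟫| ≤ ‖Φ‖ * (1 + 2 * V n ω) :=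
      (abs_real_inner_le_norm _ _).trans (by gcongr; exact Φ.norm_coe_le_norm _)
    have hΦV : 0 ≤ ‖Φ‖ * (1 + 2 * V n ω) := by positivity
    constructor <;> linarith [hξC (S i ω), abs_sub (ξ (S i ω)) ⟪Φ (π (S i ω)), d n ω⟫]
  · simpa using mean_abs_sq_le_mean_sq n fun i => ⟪Φ (π (S i ω)), d n ω⟫

end Sampling

/-! ### Residuals of the conditional means -/

section SampleApprox

variable {W Ω : Type*} [MeasurableSpace W] {mΩ : MeasurableSpace Ω} {μ : Measure Ω} {P : Measure W}
  {S : ℕ → Ω → W} {x x' : ℕ → ℕ → Ω → ℝ} {h h' : W → ℝ}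

/-- The `n`-th row of the array `x` approximates the values of `h` at the sample `S` in the sense
of `MeanClose`, after replacing `h` by a bounded measurable function equal to it `P`-almost
everywhere. -/
def IsSampleApprox (μ : Measure Ω) (P : Measure W) (S : ℕ → Ω → W) (x : ℕ → ℕ → Ω → ℝ)
    (h : W → ℝ) : Prop :=
  ∃ v : W → ℝ, Measurable v ∧ (∃ B, ∀ w, |v w| ≤ B) ∧ h =ᵐ[P] v ∧
    MeanClose μ x fun i ω => v (S i ω)

theorem IsSampleApprox.mul (hx : IsSampleApprox μ P S x h) (hx' : IsSampleApprox μ P S x' h') :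
    IsSampleApprox μ P S (fun n i ω => x n i ω * x' n i ω) fun w => h w * h' w := by
  obtain ⟨v, hv, ⟨B, hB⟩, hhv, hclose⟩ := hx
  obtain ⟨v', hv', ⟨B', hB'⟩, hhv', hclose'⟩ := hx'
  refine ⟨fun w => v w * v' w, hv.mul hv', ⟨B * B', fun w => ?_⟩, hhv.mul hhv', hclose.mul hclose'⟩
  rw [abs_mul]
  exact mul_le_mul (hB w) (hB' w) (abs_nonneg _) ((abs_nonneg _).trans (hB w))

theorem IsSampleApprox.tendstoInMeasure_mean [IsFiniteMeasure μ] [IsFiniteMeasure P]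
    (hx : IsSampleApprox μ P S x h) (hS : ∀ i, MeasurePreserving (S i) μ P)
    (hind : iIndepFun S μ) :
    TendstoInMeasure μ (fun (n : ℕ) ω => (n : ℝ)⁻¹ * ∑ i ∈ Finset.range n, x n i ω) atTop
      fun _ => ∫ w, h w ∂P := by
  obtain ⟨v, hv, ⟨B, hB⟩, hhv, hclose⟩ := hx
  rw [integral_congr_ae hhv]
  exact hclose.tendstoInMeasure_mean (tendstoInMeasure_mean_of_iIndepFun hS hind hv
    (.of_bound hv.aestronglyMeasurable B (.of_forall hB)))

end SampleApprox

section ConditionalMean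

variable {D W Ω : Type*} [MeasurableSpace D] [MeasurableSpace W] {mΩ : MeasurableSpace Ω}
  {μ : Measure Ω} {ν : Measure D} {P : Measure W} {π : W → D} {f g : D → ℝ} {φ : W → ℝ}

theorem CondMeanZero.congr_ae (h : CondMeanZero P π fun w => φ w - f (π w))
    (hπ : MeasurePreserving π P ν) (hfg : f =ᵐ[ν] g) :
    CondMeanZero P π fun w => φ w - g (π w) := by
  intro ψ hψ K hK
  rw [← h ψ hψ K hK]
  refine integral_congr_ae ?_
  filter_upwards [hπ.quasiMeasurePreserving.ae_eq_comp hfg] with w hw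
  simp only [Function.comp_apply] at hw
  rw [hw]

theorem integral_sub_condExp_mul_eq_zero [IsFiniteMeasure μ] {Z : Ω → D} (hZ : Measurable Z)
    {η : Ω → ℝ} (hη : Integrable η μ) {ψ : D → ℝ} (hψ : Measurable ψ) {K : ℝ}
    (hK : ∀ z, |ψ z| ≤ K) :
    ∫ ω, (η ω - μ[η | MeasurableSpace.comap Z inferInstance] ω) * ψ (Z ω) ∂μ = 0 := by
  set m : MeasurableSpace Ω := MeasurableSpace.comap Z inferInstance
  have hψZ : StronglyMeasurable[m] fun ω => ψ (Z ω) :=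
    (hψ.comp (comap_measurable Z)).stronglyMeasurable
  have integrable_mul {ζ : Ω → ℝ} (hζ : Integrable ζ μ) : Integrable (fun ω => ζ ω * ψ (Z ω)) μ :=
    hζ.mul_bdd (hψ.comp hZ).aestronglyMeasurable (.of_forall fun ω => hK (Z ω))
  calc ∫ ω, (η ω - μ[η | m] ω) * ψ (Z ω) ∂μ
      = ∫ ω, η ω * ψ (Z ω) ∂μ - ∫ ω, μ[η | m] ω * ψ (Z ω) ∂μ := by
        simp only [sub_mul]
        exact integral_sub (integrable_mul hη) (integrable_mul integrable_condExp)
    _ = 0 := by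
        rw [sub_eq_zero, ← integral_condExp hZ.comap_le]
        exact integral_congr_ae (condExp_mul_of_stronglyMeasurable_right hψZ (integrable_mul hη) hη)

theorem condMeanZero_of_condExp [IsFiniteMeasure μ] {T : Ω → W} (hT : Measurable T)
    (hπ : Measurable π) (hφ : Integrable φ (μ.map T)) (hf : Measurable f)
    (hcond : (fun ω => f (π (T ω))) =ᵐ[μ]
      μ[fun ω => φ (T ω) | MeasurableSpace.comap (fun ω => π (T ω)) inferInstance]) :
    CondMeanZero (μ.map T) π fun w => φ w - f (π w) := by
  intro ψ hψ K hK
  rw [integral_map hT.aemeasurable (by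
    exact (hφ.aestronglyMeasurable.sub (hf.comp hπ).aestronglyMeasurable).mul
      (hψ.comp hπ).aestronglyMeasurable)]
  rw [← integral_sub_condExp_mul_eq_zero (hπ.comp hT) (hφ.comp_measurable hT) hψ hK]
  refine integral_congr_ae ?_
  filter_upwards [hcond] with ω hω
  rw [hω]
  rfl

end ConditionalMean

section RegressionFunction

variable {D : Type} [TopologicalSpace D] [MeasurableSpace D]

/-- The assumptions under which the regression function `f` is estimated with the kernel `k`: `k`
is a bounded, continuous, symmetric positive definite kernel whose integral operator satisfies the
trace assumption, and `f` lies in the range of the power `β / 2` of that operator. -/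
structure RegressionAssumptions (ν : Measure D) (k : D → D → ℝ) (Q γ β : ℝ) (f : D → ℝ) : Prop where
  bounded : BoundedKernel k
  continuous : Continuous fun q : D × D => k q.1 q.2
  symm : ∀ z z', k z z' = k z' z
  posDef : PosDefKernel k
  exists_source : ∃ L R : Lp ℝ 2 ν →L[ℝ] Lp ℝ 2 ν, IsIntegralOperator ν k L ∧
    TraceAssumption ν L Q γ ∧ IsFracPower L (β / 2) R ∧
      ∃ hf : MemLp f 2 ν, hf.toLp f ∈ Set.range R

variable [SecondCountableTopology D] [BorelSpace D] {W Ω : Type*} [MeasurableSpace W]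
  {mΩ : MeasurableSpace Ω} {μ : Measure Ω} [IsProbabilityMeasure μ] {ν : Measure D}
  [IsProbabilityMeasure ν] {P : Measure W} {π : W → D} {f : D → ℝ} {φ : W → ℝ} {S : ℕ → Ω → W}
  {k : D → D → ℝ} {C Q γ β : ℝ} {rn : ℕ → ℕ}

theorem RegressionAssumptions.isSampleApprox_residual (hk : RegressionAssumptions ν k Q γ β f)
    (hγ : -1 < γ) (hβ : 1 ≤ β) (hS : ∀ i, MeasurePreserving (S i) μ P) (hind : iIndepFun S μ)
    (hπ : MeasurePreserving π P ν) (hφ : Measurable φ) (hφC : ∀ w, |φ w| ≤ C)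
    (hmean : CondMeanZero P π fun w => φ w - f (π w)) (hrt : Tendsto rn atTop atTop)
    (hrn : ∀ n, rn n ≤ n) :
    IsSampleApprox μ P S (fun n i ω => φ (S i ω) - rls k (fun l => π (S l ω)) (fun l => φ (S l ω))
      (rn n) (ridgeParam γ (rn n)) (π (S i ω))) fun w => φ w - f (π w) := by
  obtain ⟨hbdd, hcont, hsymm, hpd, L, R, hL, htrace, hR, hf, hfR⟩ := hk
  obtain ⟨H, _, _, _, Φ, hΦ⟩ := exists_boundedContinuous_featureMap hbdd hcont hsymm hpd
  rw [hL.eq_featureToLp_comp_adjoint hΦ] at htrace hR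
  obtain ⟨u, hu⟩ := exists_featureToLp_eq_of_mem_range (by linarith) hR hf hfR
  have hξ : Measurable fun w => φ w - ⟪Φ (π w), u⟫ :=
    hφ.sub ((Φ.continuous.inner continuous_const).measurable.comp hπ.measurable)
  have hξC (w : W) : |φ w - ⟪Φ (π w), u⟫| ≤ C + ‖Φ‖ * ‖u‖ :=
    (abs_sub _ _).trans (add_le_add (hφC w)
      ((abs_real_inner_le_norm _ _).trans (by gcongr; exact Φ.norm_coe_le_norm (π w))))
  refine ⟨_, hξ, ⟨_, hξC⟩, ?_, ?_⟩
  · filter_upwards [hπ.quasiMeasurePreserving.ae_eq_comp hu] with w hw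
    simp only [Function.comp_apply] at hw
    rw [hw]
  · simpa only [rls_eq_inner_ridge hΦ, add_sub_cancel] using
      meanClose_ridge_residual hS hind hπ hξ hξC (hmean.congr_ae hπ hu) htrace hγ u hrt hrn

theorem RegressionAssumptions.isSampleApprox_of_condExp {T : Ω → W} (hT : Measurable T)
    (hπ : Measurable π) (hk : RegressionAssumptions (μ.map fun ω => π (T ω)) k Q γ β f)
    (hγ : -1 < γ) (hβ : 1 ≤ β) (hS : ∀ i, MeasurePreserving (S i) μ (μ.map T))
    (hind : iIndepFun S μ) (hφ : Measurable φ) (hφC : ∀ w, |φ w| ≤ C) (hf : Measurable f)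
    (hcond : (fun ω => f (π (T ω))) =ᵐ[μ]
      μ[fun ω => φ (T ω) | MeasurableSpace.comap (fun ω => π (T ω)) inferInstance])
    (hrt : Tendsto rn atTop atTop) (hrn : ∀ n, rn n ≤ n) :
    IsSampleApprox μ (μ.map T) S (fun n i ω => φ (S i ω) - rls k (fun l => π (S l ω))
      (fun l => φ (S l ω)) (rn n) (ridgeParam γ (rn n)) (π (S i ω))) fun w => φ w - f (π w) := by
  have : IsProbabilityMeasure (μ.map fun ω => π (T ω)) :=
    Measure.isProbabilityMeasure_map (hπ.comp hT).aemeasurable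
  exact hk.isSampleApprox_residual hγ hβ hS hind ⟨hπ, Measure.map_map hπ hT⟩ hφ hφC
    (condMeanZero_of_condExp hT hπ (.of_bound hφ.aestronglyMeasurable C (.of_forall hφC)) hf hcond)
    hrt hrn

end RegressionFunction

/-! ### Tensor product kernels -/

section Kernel

theorem Characteristic.exists_ne_zero {D : Type*} [MeasurableSpace D] [MeasurableSingletonClass D]
    [Nontrivial D] {k : D → D → ℝ} (hk : Characteristic k) : ∃ x y, k x y ≠ 0 := by
  by_contra! hzero
  obtain ⟨a, b, hab⟩ := exists_pair_ne D
  have hdirac : Measure.dirac a = Measure.dirac b :=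
    hk _ _ inferInstance inferInstance fun t => by simp only [meanEmbed, hzero, integral_zero]
  exact hab (dirac_eq_dirac_iff.1 hdirac)

variable {DX DY : Type*} [MeasurableSpace DX] [MeasurableSpace DY] [NormedAddCommGroup DX]
  [NormedSpace ℝ DX] [NormedAddCommGroup DY] [NormedSpace ℝ DY]
  {kX : DX → DX → ℝ} {kY : DY → DY → ℝ}

theorem Assumption1.boundedKernel_and_continuous_left (hk : Assumption1 kX kY) {y y' : DY}
    (hne : kY y y' ≠ 0) : BoundedKernel kX ∧ ∀ t, Continuous (kX t) := by
  obtain ⟨C, hC⟩ := hk.bounded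
  refine ⟨⟨C / |kY y y'|, fun t x => ?_⟩, fun t => ?_⟩
  · rw [le_div_iff₀ (abs_pos.2 hne), ← abs_mul]
    exact hC (t, y) (x, y')
  · have hcont : Continuous fun x => kX t x * kY y y' :=
      hk.continuous.comp (by fun_prop : Continuous fun x => ((t, y), (x, y')))
    simpa only [mul_div_cancel_right₀ _ hne] using hcont.div_const (kY y y')

theorem Assumption1.boundedKernel_and_continuous_right (hk : Assumption1 kX kY) {x x' : DX}
    (hne : kX x x' ≠ 0) : BoundedKernel kY ∧ ∀ t, Continuous (kY t) := by
  obtain ⟨C, hC⟩ := hk.bounded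
  refine ⟨⟨C / |kX x x'|, fun t y => ?_⟩, fun t => ?_⟩
  · rw [le_div_iff₀' (abs_pos.2 hne), ← abs_mul]
    exact hC (x, t) (x', y)
  · have hcont : Continuous fun y => kX x x' * kY t y :=
      hk.continuous.comp (by fun_prop : Continuous fun y => ((x, t), (x', y)))
    simpa only [mul_div_cancel_left₀ _ hne] using hcont.div_const (kX x x')

end Kernel

theorem tendsto_atTop_of_rpow_isBigO {a : ℝ} (ha : 0 < a) {r : ℕ → ℕ}
    (hr : (fun n : ℕ => (n : ℝ) ^ a) =O[atTop] fun n => (r n : ℝ)) : Tendsto r atTop atTop := by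
  have hpow : Tendsto (fun n : ℕ => (n : ℝ) ^ a) atTop atTop :=
    (tendsto_rpow_atTop ha).comp tendsto_natCast_atTop_atTop
  refine (tendsto_natCast_atTop_iff (R := ℝ)).1 ?_
  simpa only [RCLike.norm_natCast] using
    hr.trans_tendsto_norm_atTop (tendsto_norm_atTop_atTop.comp hpow)

end CIPaper

theorem statement_17_general {Ω DX DY : Type*} {DZ : Type} {mΩ : MeasurableSpace Ω}
    [MeasurableSpace DX] [MeasurableSpace DY] [MeasurableSpace DZ] [TopologicalSpace DZ]
    [SecondCountableTopology DZ] [BorelSpace DZ] {μ : Measure Ω} [IsProbabilityMeasure μ]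
    {X : Ω → DX} {Z : Ω → DZ} {Y : Ω → DY}
    (hX : Measurable X) (hZ : Measurable Z) (hY : Measurable Y)
    {kX : DX × DZ → DX × DZ → ℝ} {kY : DY → DY → ℝ}
    (hkX : BoundedKernel kX) (hkXm : ∀ s, Measurable (kX s))
    (hkY : BoundedKernel kY) (hkYm : ∀ s, Measurable (kY s))
    {e1 : DX × DZ → DZ → ℝ} {e2 : DY → DZ → ℝ}
    (he1m : ∀ s, Measurable (e1 s)) (he2m : ∀ s, Measurable (e2 s))
    (he1 : ∀ s, (fun ω => e1 s (Z ω)) =ᵐ[μ]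
      μ[fun ω => kX s (X ω, Z ω) | MeasurableSpace.comap Z inferInstance])
    (he2 : ∀ s, (fun ω => e2 s (Z ω)) =ᵐ[μ]
      μ[fun ω => kY s (Y ω) | MeasurableSpace.comap Z inferInstance])
    {xS : ℕ → Ω → DX} {zS : ℕ → Ω → DZ} {yS : ℕ → Ω → DY}
    (hxS : ∀ i, Measurable (xS i)) (hzS : ∀ i, Measurable (zS i)) (hyS : ∀ i, Measurable (yS i))
    (hiid : iIndepFun (fun i ω => ((xS i ω, zS i ω), yS i ω)) μ)
    (hlaw : ∀ i, μ.map (fun ω => ((xS i ω, zS i ω), yS i ω)) = μ.map fun ω => ((X ω, Z ω), Y ω))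
    {J : ℕ} {t : Fin J → (DX × DZ) × DY} {kZ1 kZ2 : Fin J → DZ → DZ → ℝ} {Q γ β : ℝ}
    (hγ : 0 ≤ γ) (hβ : 1 ≤ β)
    (hkZ1 : ∀ j, RegressionAssumptions (μ.map Z) (kZ1 j) Q γ β (e1 (t j).1))
    (hkZ2 : ∀ j, RegressionAssumptions (μ.map Z) (kZ2 j) Q γ β (e2 (t j).2))
    {rn : ℕ → ℕ} (hrt : Tendsto rn atTop atTop) (hrn : ∀ n, rn n ≤ n) (j j' : Fin J) :
    TendstoInMeasure μ (fun n ω => covTilde kX kY kZ1 kZ2 xS zS yS t n (rn n)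
      ((rn n : ℝ) ^ (-(1 / (1 + γ)))) ω j j') atTop
      fun _ => covMat μ kX kY e1 e2 xS zS yS t j j' := by
  let T : Ω → (DX × DZ) × DY := fun ω => ((X ω, Z ω), Y ω)
  let S : ℕ → Ω → (DX × DZ) × DY := fun i ω => ((xS i ω, zS i ω), yS i ω)
  let π : (DX × DZ) × DY → DZ := fun w => w.1.2
  have hT : Measurable T := (hX.prodMk hZ).prodMk hY
  have hS (i : ℕ) : MeasurePreserving (S i) μ (μ.map T) :=
    ⟨((hxS i).prodMk (hzS i)).prodMk (hyS i), hlaw i⟩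
  have hπ : Measurable π := measurable_snd.comp measurable_fst
  have : IsProbabilityMeasure (μ.map T) := Measure.isProbabilityMeasure_map hT.aemeasurable
  obtain ⟨CX, hCX⟩ := hkX
  obtain ⟨CY, hCY⟩ := hkY
  let u (j : Fin J) (w : (DX × DZ) × DY) : ℝ :=
    (kX (t j).1 w.1 - e1 (t j).1 (π w)) * (kY (t j).2 w.2 - e2 (t j).2 (π w))
  have hu (j : Fin J) : Measurable (u j) := by fun_prop
  have happrox (j : Fin J) : IsSampleApprox μ (μ.map T) S
      (fun n i => uTildeStat kX kY kZ1 kZ2 xS zS yS t (rn n) (ridgeParam γ (rn n)) i j) (u j) :=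
    ((hkZ1 j).isSampleApprox_of_condExp hT hπ (by linarith) hβ hS hiid
      ((hkXm (t j).1).comp measurable_fst) (fun w => hCX _ _) (he1m _) (he1 _) hrt hrn).mul
    ((hkZ2 j).isSampleApprox_of_condExp hT hπ (by linarith) hβ hS hiid
      ((hkYm (t j).2).comp measurable_snd) (fun w => hCY _ _) (he2m _) (he2 _) hrt hrn)
  have hcov : ∫ w, u j w * u j' w ∂μ.map T = covMat μ kX kY e1 e2 xS zS yS t j j' := by
    rw [← (hS 0).map_eq]
    exact integral_map (hS 0).aemeasurable ((hu j).mul (hu j')).aestronglyMeasurable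
  rw [← hcov]
  exact ((happrox j).mul (happrox j')).tendstoInMeasure_mean hS hiid

/-- `Σ_{n,r_n} → Σ` in probability under `H₀`. -/
theorem statement_17
    (dx dy dz : ℕ) (hdx : 1 ≤ dx) (hdy : 1 ≤ dy) (hdz : 1 ≤ dz)
    {Ω : Type} [MeasurableSpace Ω] [StandardBorelSpace Ω] [Nonempty Ω]
    (μ : Measure Ω) [IsProbabilityMeasure μ]
    (X : Ω → Fin dx → ℝ) (Z : Ω → Fin dz → ℝ) (Y : Ω → Fin dy → ℝ)
    (hX : Measurable X) (hZ : Measurable Z) (hY : Measurable Y)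
    (J : ℕ) (hJ : 1 ≤ J)
    (kX : ((Fin dx → ℝ) × (Fin dz → ℝ)) → ((Fin dx → ℝ) × (Fin dz → ℝ)) → ℝ) (kY : (Fin dy → ℝ) → (Fin dy → ℝ) → ℝ)
    (hk : Assumption1 kX kY)
    (e1 : ((Fin dx → ℝ) × (Fin dz → ℝ)) → (Fin dz → ℝ) → ℝ) (e2 : (Fin dy → ℝ) → (Fin dz → ℝ) → ℝ)
    (he1m : ∀ t1, Measurable (e1 t1)) (he2m : ∀ t2, Measurable (e2 t2))
    (he1 : ∀ t1, (fun ω => e1 t1 (Z ω)) =ᵐ[μ]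
      μ[fun ω' => kX t1 (X ω', Z ω') | MeasurableSpace.comap Z inferInstance])
    (he2 : ∀ t2, (fun ω => e2 t2 (Z ω)) =ᵐ[μ]
      μ[fun ω' => kY t2 (Y ω') | MeasurableSpace.comap Z inferInstance])
    (xS : ℕ → Ω → Fin dx → ℝ) (zS : ℕ → Ω → Fin dz → ℝ) (yS : ℕ → Ω → Fin dy → ℝ)
    (hxS : ∀ i, Measurable (xS i)) (hzS : ∀ i, Measurable (zS i)) (hyS : ∀ i, Measurable (yS i))
    (hiid : iIndepFun (fun i ω => ((xS i ω, zS i ω), yS i ω)) μ)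
    (hlaw : ∀ i, μ.map (fun ω => ((xS i ω, zS i ω), yS i ω)) =
      μ.map fun ω => ((X ω, Z ω), Y ω))
    (kZ1 kZ2 : Fin J → (Fin dz → ℝ) → (Fin dz → ℝ) → ℝ)
    (hkZ1bdd : ∀ j, BoundedKernel (kZ1 j)) (hkZ2bdd : ∀ j, BoundedKernel (kZ2 j))
    (hkZ1cont : ∀ j, Continuous fun q : (Fin dz → ℝ) × (Fin dz → ℝ) => kZ1 j q.1 q.2)
    (hkZ2cont : ∀ j, Continuous fun q : (Fin dz → ℝ) × (Fin dz → ℝ) => kZ2 j q.1 q.2)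
    (hkZ1symm : ∀ j z z', kZ1 j z z' = kZ1 j z' z)
    (hkZ2symm : ∀ j z z', kZ2 j z z' = kZ2 j z' z)
    (hkZ1pd : ∀ j, PosDefKernel (kZ1 j)) (hkZ2pd : ∀ j, PosDefKernel (kZ2 j))
    (L1 L2 : Fin J → (Lp ℝ 2 (μ.map Z) →L[ℝ] Lp ℝ 2 (μ.map Z)))
    (hL1 : ∀ (j : Fin J) (g : Lp ℝ 2 (μ.map Z)),
      (L1 j g : (Fin dz → ℝ) → ℝ) =ᵐ[μ.map Z] fun z => ∫ z', kZ1 j z z' * g z' ∂(μ.map Z))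
    (hL2 : ∀ (j : Fin J) (g : Lp ℝ 2 (μ.map Z)),
      (L2 j g : (Fin dz → ℝ) → ℝ) =ᵐ[μ.map Z] fun z => ∫ z', kZ2 j z z' * g z' ∂(μ.map Z))
    (Q γ : ℝ) (hQ : 0 < Q) (hγ0 : 0 ≤ γ) (hγ1 : γ ≤ 1)
    (hA2 : ∀ j, TraceAssumption (μ.map Z) (L1 j) Q γ ∧ TraceAssumption (μ.map Z) (L2 j) Q γ)
    (β : ℝ) (hβ1 : 1 < β) (hβ2 : β ≤ 2)
    (Lβ1 Lβ2 : Fin J → (Lp ℝ 2 (μ.map Z) →L[ℝ] Lp ℝ 2 (μ.map Z)))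
    (hLβ1 : ∀ j, IsFracPower (L1 j) (β / 2) (Lβ1 j))
    (hLβ2 : ∀ j, IsFracPower (L2 j) (β / 2) (Lβ2 j))
    (he1mem : ∀ t1, MemLp (e1 t1) 2 (μ.map Z)) (he2mem : ∀ t2, MemLp (e2 t2) 2 (μ.map Z))
    (hA3r1 : ∀ (j : Fin J) (t1 : ((Fin dx → ℝ) × (Fin dz → ℝ))), MemLp.toLp (e1 t1) (he1mem t1) ∈ Set.range ⇑(Lβ1 j))
    (hA3r2 : ∀ (j : Fin J) (t2 : Fin dy → ℝ), MemLp.toLp (e2 t2) (he2mem t2) ∈ Set.range ⇑(Lβ2 j))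
    (σ0 L0 : ℝ) (hσ0 : 0 < σ0) (hL0 : 0 < L0)
    (hmom1 : ∀ (t1 : ((Fin dx → ℝ) × (Fin dz → ℝ))) (l : ℕ), 2 ≤ l → ∀ᵐ ω ∂μ,
      (μ[fun ω' => |kX t1 (X ω', Z ω') - e1 t1 (Z ω')| ^ l |
        MeasurableSpace.comap Z inferInstance]) ω ≤ (l.factorial : ℝ) * σ0 ^ 2 * L0 ^ (l - 2) / 2)
    (hmom2 : ∀ (t2 : Fin dy → ℝ) (l : ℕ), 2 ≤ l → ∀ᵐ ω ∂μ,
      (μ[fun ω' => |kY t2 (Y ω') - e2 t2 (Z ω')| ^ l |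
        MeasurableSpace.comap Z inferInstance]) ω ≤ (l.factorial : ℝ) * σ0 ^ 2 * L0 ^ (l - 2) / 2)
    (rn : ℕ → ℕ) (hrn : ∀ n, rn n ≤ n)
    (hro : (fun n : ℕ => (n : ℝ) ^ ((β + γ) / (2 * β))) =o[atTop] fun n => (rn n : ℝ))
    (t : Fin J → (((Fin dx → ℝ) × (Fin dz → ℝ)) × (Fin dy → ℝ)))
    (hH0 : CondIndepFun (MeasurableSpace.comap Z inferInstance) hZ.comap_le X Y μ) :
    ∀ ε : ℝ, 0 < ε → ∀ j j' : Fin J,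
      Tendsto (fun n : ℕ => (μ {ω | ε ≤
          |covTilde kX kY kZ1 kZ2 xS zS yS t n (rn n) ((rn n : ℝ) ^ (-(1 / (1 + γ)))) ω j j' - covMat μ kX kY e1 e2 xS zS yS t j j'|}).toReal) atTop (𝓝 0) := by
  have : Nonempty (Fin dx) := ⟨⟨0, hdx⟩⟩
  obtain ⟨p, q, hpq⟩ := hk.charac.exists_ne_zero
  obtain ⟨hkXb, hkXc⟩ := hk.boundedKernel_and_continuous_left (right_ne_zero_of_mul hpq)
  obtain ⟨hkYb, hkYc⟩ := hk.boundedKernel_and_continuous_right (left_ne_zero_of_mul hpq)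
  have hrt : Tendsto rn atTop atTop := tendsto_atTop_of_rpow_isBigO (by positivity) hro.isBigO
  intro ε hε j j'
  exact tendstoInMeasure_iff_measureReal_norm.1 (statement_17_general hX hZ hY
    hkXb (fun s => (hkXc s).measurable) hkYb (fun s => (hkYc s).measurable) he1m he2m he1 he2
    hxS hzS hyS hiid hlaw hγ0 hβ1.le
    (fun i => ⟨hkZ1bdd i, hkZ1cont i, hkZ1symm i, hkZ1pd i,
      L1 i, Lβ1 i, hL1 i, (hA2 i).1, hLβ1 i, he1mem _, hA3r1 i _⟩)
    (fun i => ⟨hkZ2bdd i, hkZ2cont i, hkZ2symm i, hkZ2pd i,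
      L2 i, Lβ2 i, hL2 i, (hA2 i).2, hLβ2 i, he2mem _, hA3r2 i _⟩) hrt hrn j j') ε hε
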